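/- Root multiplicities in the m = 7 row for the simplest rank-2 hyperbolic Kac–Moody algebra: in g(A) with A = [[2,−3],[−3,2]], one has mult(7,3) = 2, mult(7,4) = 9, mult(7,5) = 27, mult(7,6) = 60, mult(7,7) = 107, mult(7,8) = 162, mult(7,9) = 211, mult(7,10) = 240, mult(7,11) = 240, and mult(7,12) = 211. -/

import Mathlib

noncomputable section

open CartanMatrix

/-- A generalized Cartan matrix: `A i i = 2`, off-diagonal entries are non-positive, and
`A i j = 0 ↔ A j i = 0`. -/
def IsGCM {B : Type*} (A : Matrix B B ℤ) : Prop :=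
  (∀ i, A i i = 2) ∧ (∀ i j, i ≠ j → A i j ≤ 0) ∧ (∀ i j, A i j = 0 ↔ A j i = 0)

/-- The images in the Kac–Moody algebra `Matrix.ToLieAlgebra ℚ A` of the generators of the
free Lie algebra. -/
def KMgen {B : Type*} [DecidableEq B] (A : Matrix B B ℤ) (x : Generators B) :
    Matrix.ToLieAlgebra ℚ A :=
  LieSubmodule.Quotient.mk (N := Relations.toIdeal ℚ A) (FreeLieAlgebra.of ℚ x)

/-- The Cartan generator `h i`. -/
def gH {B : Type*} [DecidableEq B] (A : Matrix B B ℤ) (i : B) : Matrix.ToLieAlgebra ℚ A :=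
  KMgen A (Generators.H i)

/-- The raising generator `e i`. -/
def gE {B : Type*} [DecidableEq B] (A : Matrix B B ℤ) (i : B) : Matrix.ToLieAlgebra ℚ A :=
  KMgen A (Generators.E i)

/-- The lowering generator `f i`. -/
def gF {B : Type*} [DecidableEq B] (A : Matrix B B ℤ) (i : B) : Matrix.ToLieAlgebra ℚ A :=
  KMgen A (Generators.F i)

/-- The root space of `g(A)` attached to `n : B → ℤ`: the simultaneous eigenspace of the
adjoint action of the Cartan generators `h i`, with eigenvalues `∑ j, A i j * n j`. -/
def rootSpace {B : Type*} [Fintype B] [DecidableEq B] (A : Matrix B B ℤ) (n : B → ℤ) :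
    Submodule ℚ (Matrix.ToLieAlgebra ℚ A) :=
  ⨅ i, Module.End.eigenspace
    (LieAlgebra.ad ℚ (Matrix.ToLieAlgebra ℚ A) (gH A i)) ((∑ j, A i j * n j : ℤ) : ℚ)

/-- The multiplicity of `n` in `g(A)`: the dimension of the root space. -/
def rootMult {B : Type*} [Fintype B] [DecidableEq B] (A : Matrix B B ℤ) (n : B → ℤ) : ℕ :=
  Module.finrank ℚ (rootSpace A n)

/-- The Cartan matrix of the simplest rank-2 hyperbolic Kac–Moody algebra. -/
def A2hyp : Matrix (Fin 2) (Fin 2) ℤ := !![2, -3; -3, 2]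

/-!
Put `x j = ad (e 1) ^ j (e 0) / j!` for `j < 4`; the Serre relation `ad (e 1) ^ 4 (e 0) = 0` ends
the string there. In positive `e 0`-degree `g(A2hyp)` is the free Lie algebra on `x 0, …, x 3`
modulo the ideal generated by the relators, the coefficients of `ad x(t) ^ 3 x'(t)` for
`x(t) = ∑ x j t ^ j`: the constant one is the other Serre relation, and bracketing with `e 1` runs
through the rest. That there are no further relations is seen by letting `g(A2hyp)` act on the free
associative algebra modulo the relators, with `e 0` acting as left multiplication by `x 0`.

Hence the multiplicity of `(m, n)` is the dimension of a component of a free Lie algebra minus that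
of the relators in it. By the Dynkin–Specht–Wever theorem right-normed bracketing is `m` times a
projection onto the Lie elements of degree `m`, so the first dimension is a trace divided by `m`.
The second component is spanned by the elements `ad u ρ` with `u` a word of length `m - 4` and `ρ`
a relator. For `m = 7` they are linearly independent already modulo `3`, where elimination is short
because the coefficient `s - 3 r + 3 q - p` of a word `p q r s` in a relator reduces to `s - p`.
-/

attribute [local instance] LieRing.ofAssociativeRing

namespace RankTwo

section Words

variable {R ι M : Type*} [CommRing R]

variable (R) in
/-- The monomial of the free algebra spelled by the letters of `w`. -/
def word (w : List ι) : FreeAlgebra R ι := (w.map (FreeAlgebra.ι R)).prod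

@[simp] theorem word_nil : word R ([] : List ι) = 1 := rfl

@[simp] theorem word_cons (j : ι) (w : List ι) :
    word R (j :: w) = FreeAlgebra.ι R j * word R w := by
  simp [word]

theorem word_append (u w : List ι) : word R (u ++ w) = word R u * word R w := by
  simp [word]

variable (R ι) in
/-- The words as a basis of the free algebra. -/
def wordBasis : Module.Basis (List ι) R (FreeAlgebra R ι) :=
  (FreeAlgebra.basisFreeMonoid R ι).reindex FreeMonoid.toList

@[simp] theorem wordBasis_apply (w : List ι) : wordBasis R ι w = word R w := by
  simp [wordBasis, FreeAlgebra.basisFreeMonoid, word, FreeAlgebra.equivMonoidAlgebraFreeMonoid]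

@[elab_as_elim]
theorem word_induction {P : FreeAlgebra R ι → Prop} (word : ∀ w, P (word R w))
    (add : ∀ a b, P a → P b → P (a + b)) (smul : ∀ (c : R) a, P a → P (c • a))
    (a : FreeAlgebra R ι) : P a := by
  have ha : a ∈ Submodule.span R (Set.range (wordBasis R ι)) := (wordBasis R ι).mem_span a
  induction ha using Submodule.span_induction with
  | mem _ h => obtain ⟨w, rfl⟩ := h; simpa using word w
  | zero => simpa using smul 0 _ (word [])
  | add a b _ _ ha hb => exact add a b ha hb
  | smul c a _ ha => exact smul c a ha

end Words

section Dynkin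

variable {R ι L : Type*} [CommRing R] [LieRing L] [LieAlgebra R L] (x : ι → L)

/-- The right-normed bracket `⁅x j₁, ⁅x j₂, …, x jₘ⁆⁆` of the letters of a word. -/
def rightNormed : List ι → L
  | [] => 0
  | [j] => x j
  | j :: k :: w => ⁅x j, rightNormed (k :: w)⁆

variable (R) in
/-- The Dynkin map, sending a word to its right-normed bracket. -/
def dynkin : FreeAlgebra R ι →ₗ[R] L := (wordBasis R ι).constr R (rightNormed x)

variable (R) in
/-- The adjoint action of the free algebra on a Lie algebra with chosen elements `x j`. -/
def adAction : FreeAlgebra R ι →ₐ[R] Module.End R L :=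
  FreeAlgebra.lift R fun j => LieAlgebra.ad R L (x j)

@[simp] theorem dynkin_word (w : List ι) : dynkin R x (word R w) = rightNormed x w := by
  rw [← wordBasis_apply, dynkin, Module.Basis.constr_basis]

@[simp] theorem dynkin_one : dynkin R x 1 = 0 := dynkin_word x []

@[simp] theorem adAction_ι (j : ι) (y : L) : adAction R x (FreeAlgebra.ι R j) y = ⁅x j, y⁆ := by
  simp [adAction]

theorem dynkin_ι_mul (j : ι) (a : FreeAlgebra R ι) :
    dynkin R x (FreeAlgebra.ι R j * a) =
      ⁅x j, dynkin R x a⁆ + FreeAlgebra.algebraMapInv a • x j := by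
  induction a using word_induction with
  | word w =>
    rw [← word_cons]
    cases w <;> simp only [dynkin_word, rightNormed] <;> simp [FreeAlgebra.algebraMapInv]
  | add a b ha hb => simp only [mul_add, map_add, ha, hb, lie_add, add_smul]; abel
  | smul c a ha => simp [ha, smul_smul]

@[simp] theorem dynkin_ι (j : ι) : dynkin R x (FreeAlgebra.ι R j) = x j := by
  simpa using dynkin_ι_mul (R := R) x j 1

theorem dynkin_mul (a b : FreeAlgebra R ι) :
    dynkin R x (a * b) =
      adAction R x a (dynkin R x b) + FreeAlgebra.algebraMapInv b • dynkin R x a := by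
  induction a using FreeAlgebra.induction generalizing b with
  | grade0 r => simp [Algebra.algebraMap_eq_smul_one]
  | grade1 j => simp [dynkin_ι_mul]
  | mul a a' ha ha' =>
    rw [mul_assoc, ha, ha', ha]
    simp only [map_mul, map_add, map_smul, Module.End.mul_apply, smul_add, smul_smul]
    rw [mul_comm (FreeAlgebra.algebraMapInv a')]
    abel
  | add a a' ha ha' => simp only [add_mul, map_add, ha, ha', LinearMap.add_apply, smul_add]; abel

/-- `z` is a homogeneous Lie polynomial of degree `m` whose value at `x` is `y`. It is encoded by
the consequences that matter: no constant term, and the values of `z` under the adjoint action and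
(the Dynkin–Specht–Wever theorem) under the Dynkin map. -/
structure HasLieValue (m : ℕ) (z : FreeAlgebra R ι) (y : L) : Prop where
  algebraMapInv_eq : FreeAlgebra.algebraMapInv z = 0
  adAction_eq : adAction R x z = LieAlgebra.ad R L y
  dynkin_eq : dynkin R x z = m • y

namespace HasLieValue

variable {x} {m n : ℕ} {z z' : FreeAlgebra R ι} {y y' : L}

theorem letter (j : ι) : HasLieValue x 1 (FreeAlgebra.ι R j) (x j) :=
  ⟨by simp [FreeAlgebra.algebraMapInv], by simp [adAction], by simp⟩

theorem zero : HasLieValue x m (0 : FreeAlgebra R ι) 0 :=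
  ⟨map_zero _, by simp, by simp⟩

theorem add (h : HasLieValue x m z y) (h' : HasLieValue x m z' y') :
    HasLieValue x m (z + z') (y + y') :=
  ⟨by simp [h.algebraMapInv_eq, h'.algebraMapInv_eq], by simp [h.adAction_eq, h'.adAction_eq],
    by simp [h.dynkin_eq, h'.dynkin_eq]⟩

theorem nsmul (k : ℕ) (h : HasLieValue x m z y) : HasLieValue x m (k • z) (k • y) :=
  ⟨by simp [h.algebraMapInv_eq], by simp [h.adAction_eq],
    by rw [map_nsmul, h.dynkin_eq, smul_comm]⟩

theorem sum {α : Type*} (s : Finset α) {z : α → FreeAlgebra R ι} {y : α → L}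
    (h : ∀ a ∈ s, HasLieValue x m (z a) (y a)) :
    HasLieValue x m (∑ a ∈ s, z a) (∑ a ∈ s, y a) := by
  induction s using Finset.cons_induction with
  | empty => exact zero
  | cons a s ha ih =>
    rw [Finset.sum_cons, Finset.sum_cons]
    exact (h a (Finset.mem_cons_self a s)).add
      (ih fun b hb => h b (Finset.mem_cons_of_mem hb))

theorem lie (h : HasLieValue x m z y) (h' : HasLieValue x n z' y') :
    HasLieValue x (m + n) ⁅z, z'⁆ ⁅y, y'⁆ where
  algebraMapInv_eq := by simp [Ring.lie_def, h.algebraMapInv_eq]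
  adAction_eq := by
    rw [Ring.lie_def, map_sub, map_mul, map_mul, h.adAction_eq, h'.adAction_eq, LieHom.map_lie,
      Ring.lie_def]
  dynkin_eq := by
    rw [Ring.lie_def, map_sub, dynkin_mul, dynkin_mul, h.algebraMapInv_eq, h'.algebraMapInv_eq,
      h.adAction_eq, h'.adAction_eq, h.dynkin_eq, h'.dynkin_eq]
    simp only [zero_smul, add_zero, LieAlgebra.ad_apply, lie_nsmul]
    rw [← lie_skew y' y, smul_neg, sub_neg_eq_add, add_smul, add_comm]

theorem adAction_word (h : HasLieValue x m z y) (w : List ι) :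
    HasLieValue x (w.length + m) (adAction R (FreeAlgebra.ι R) (word R w) z)
      (adAction R x (word R w) y) := by
  induction w with
  | nil => simpa using h
  | cons j w ih =>
    rw [List.length_cons, add_right_comm, add_comm _ 1, word_cons, map_mul, map_mul]
    simpa using (letter j).lie ih

end HasLieValue

theorem hasLieValue_rightNormed (w : List ι) :
    HasLieValue x w.length (rightNormed (FreeAlgebra.ι R) w) (rightNormed x w) := by
  match w with
  | [] => exact .zero
  | [j] => exact .letter j
  | j :: k :: w =>
    rw [List.length_cons, add_comm]
    exact (HasLieValue.letter j).lie (hasLieValue_rightNormed (k :: w))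

variable (R ι) in
/-- The Dynkin map of the free algebra into itself. -/
abbrev bracketing : FreeAlgebra R ι →ₗ[R] FreeAlgebra R ι := dynkin R (FreeAlgebra.ι R)

theorem adAction_bracketing (a : FreeAlgebra R ι) :
    adAction R x (bracketing R ι a) = LieAlgebra.ad R L (dynkin R x a) := by
  induction a using word_induction with
  | word w => simp [(hasLieValue_rightNormed x w).adAction_eq]
  | add a b ha hb => simp [ha, hb]
  | smul c a ha => simp [ha]

theorem lie_mem_range_dynkin {y z : L} (hy : y ∈ (dynkin R x).range)
    (hz : z ∈ (dynkin R x).range) : ⁅y, z⁆ ∈ (dynkin R x).range := by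
  obtain ⟨a, rfl⟩ := hy
  obtain ⟨b, rfl⟩ := hz
  have h_mul := dynkin_mul x (bracketing R ι a) b
  rw [adAction_bracketing, LieAlgebra.ad_apply, ← sub_eq_iff_eq_add, ← map_smul, ← map_sub] at h_mul
  exact ⟨_, h_mul⟩

theorem mem_range_dynkin (j : ι) : x j ∈ (dynkin R x).range := ⟨FreeAlgebra.ι R j, dynkin_ι x j⟩

theorem lie_mem_range_dynkin_of_letter {y : L} (h : ∀ j, ⁅y, x j⁆ ∈ (dynkin R x).range) {z : L}
    (hz : z ∈ (dynkin R x).range) : ⁅y, z⁆ ∈ (dynkin R x).range := by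
  obtain ⟨a, rfl⟩ := hz
  induction a using word_induction with
  | word w =>
    rw [dynkin_word]
    induction w with
    | nil => simp [rightNormed]
    | cons j w ih =>
      cases w with
      | nil => exact h j
      | cons k w =>
        rw [rightNormed, leibniz_lie]
        exact add_mem (lie_mem_range_dynkin x (h j) ⟨word R (k :: w), dynkin_word x _⟩)
          (lie_mem_range_dynkin x (mem_range_dynkin x j) ih)
  | add a b ha hb => simpa only [map_add, lie_add] using add_mem ha hb
  | smul c a ha => simpa only [map_smul, lie_smul] using Submodule.smul_mem _ c ha

end Dynkin

section DynkinMap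

variable {R ι L L' : Type*} [CommRing R] [LieRing L] [LieAlgebra R L] [LieRing L']
  [LieAlgebra R L']

theorem map_rightNormed (φ : L →ₗ⁅R⁆ L') (x : ι → L) (w : List ι) :
    φ (rightNormed x w) = rightNormed (φ ∘ x) w := by
  match w with
  | [] => simp [rightNormed]
  | [j] => rfl
  | j :: k :: w => simp [rightNormed, map_rightNormed φ x (k :: w)]

theorem map_dynkin (φ : L →ₗ⁅R⁆ L') (x : ι → L) (a : FreeAlgebra R ι) :
    φ (dynkin R x a) = dynkin R (φ ∘ x) a := by
  induction a using word_induction with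
  | word w => rw [dynkin_word, dynkin_word, map_rightNormed]
  | add a b ha hb => rw [map_add, map_add, map_add, ha, hb]
  | smul c a ha => rw [map_smul, map_smul, map_smul, ha]

end DynkinMap

section Operators

variable {R ι : Type*} [CommRing R]

local notation "T" => FreeAlgebra R ι
local notation "ℓ" => Algebra.lmul R (FreeAlgebra R ι)

theorem lie_lmul_apply (Q : Module.End R T) (a b : T) :
    ⁅Q, ℓ a⁆ b = Q (a * b) - a * Q b := by
  simp [Ring.lie_def]

theorem lmul_lie_lmul (a b : T) :
    ⁅ℓ a, ℓ b⁆ = ℓ ⁅a, b⁆ := by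
  rw [Ring.lie_def, Ring.lie_def, map_sub, map_mul, map_mul]

theorem end_ext {Q Q' : Module.End R T} (h_one : Q 1 = Q' 1)
    (h_lie : ∀ j, ⁅Q, ℓ (FreeAlgebra.ι R j)⁆ =
      ⁅Q', ℓ (FreeAlgebra.ι R j)⁆) : Q = Q' := by
  refine LinearMap.ext fun a => ?_
  induction a using word_induction with
  | word w =>
    induction w with
    | nil => simpa using h_one
    | cons j w ih =>
      have := DFunLike.congr_fun (h_lie j) (word R w)
      simpa [lie_lmul_apply, ih] using this
  | add a b ha hb => simp [ha, hb]
  | smul c a ha => simp [ha]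

/-- The values on words of the operator `endOfLie β`. -/
def endOfLieWord (β : ι → Module.End R T) : List ι → T
  | [] => 0
  | j :: w => β j (word R w) + FreeAlgebra.ι R j * endOfLieWord β w

/-- The operator `Q` on the free algebra that kills `1` and whose commutator with left
multiplication by the letter `j` is `β j`. -/
def endOfLie (β : ι → Module.End R T) : Module.End R T :=
  (wordBasis R ι).constr R (endOfLieWord β)

theorem endOfLie_word (β : ι → Module.End R T) (w : List ι) :
    endOfLie β (word R w) = endOfLieWord β w := by
  rw [← wordBasis_apply, endOfLie, Module.Basis.constr_basis]

@[simp] theorem endOfLie_one (β : ι → Module.End R T) : endOfLie β 1 = 0 :=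
  endOfLie_word β []

@[simp] theorem endOfLie_lie (β : ι → Module.End R T) (j : ι) :
    ⁅endOfLie β, ℓ (FreeAlgebra.ι R j)⁆ = β j := by
  refine (wordBasis R ι).ext fun w => ?_
  rw [lie_lmul_apply, wordBasis_apply, ← word_cons, endOfLie_word, endOfLie_word]
  simp [endOfLieWord]

/-- The derivation of the free algebra with prescribed values on the letters. -/
def derivation (φ : ι → T) : Module.End R T := endOfLie fun j => ℓ (φ j)

@[simp] theorem derivation_one (φ : ι → T) : derivation φ 1 = 0 := endOfLie_one _

theorem derivation_ι_mul (φ : ι → T) (j : ι) (b : T) :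
    derivation φ (FreeAlgebra.ι R j * b) = φ j * b + FreeAlgebra.ι R j * derivation φ b := by
  have := DFunLike.congr_fun (endOfLie_lie (fun j => ℓ (φ j)) j) b
  rwa [lie_lmul_apply, sub_eq_iff_eq_add] at this

@[simp] theorem derivation_ι (φ : ι → T) (j : ι) : derivation φ (FreeAlgebra.ι R j) = φ j := by
  simpa using derivation_ι_mul φ j 1

theorem derivation_mul (φ : ι → T) (a b : T) :
    derivation φ (a * b) = derivation φ a * b + a * derivation φ b := by
  induction a using FreeAlgebra.induction generalizing b with
  | grade0 r => simp [Algebra.algebraMap_eq_smul_one]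
  | grade1 j => simp [derivation_ι_mul]
  | mul a a' ha ha' => rw [mul_assoc, ha, ha', ha]; noncomm_ring
  | add a a' ha ha' => simp only [add_mul, map_add, ha, ha']; abel

theorem derivation_lie_lmul (φ : ι → T) (a : T) :
    ⁅derivation φ, ℓ a⁆ = ℓ (derivation φ a) := by
  ext b
  simp [derivation_mul]

theorem derivation_lie (φ : ι → T) (a b : T) :
    derivation φ ⁅a, b⁆ = ⁅derivation φ a, b⁆ + ⁅a, derivation φ b⁆ := by
  simp only [Ring.lie_def, map_sub, derivation_mul]
  abel

theorem derivation_ext {φ : ι → T} {Q : Module.End R T} (h_one : Q 1 = 0)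
    (h_lie : ∀ j, ⁅Q, ℓ (FreeAlgebra.ι R j)⁆ = ℓ (φ j)) :
    Q = derivation φ :=
  end_ext (by rw [h_one, derivation_one]) fun j => by rw [h_lie, derivation, endOfLie_lie]

theorem lie_derivation_derivation (φ ψ : ι → T) :
    ⁅derivation φ, derivation ψ⁆ =
      derivation fun j => derivation φ (ψ j) - derivation ψ (φ j) := by
  refine derivation_ext (by simp [Ring.lie_def]) fun j => ?_
  rw [lie_lie]
  simp only [derivation_lie_lmul, derivation_ι]
  ext
  simp

end Operators

section Chevalley

variable {B L L' : Type*} [LieRing L] [LieAlgebra ℚ L] [LieRing L']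
  [LieAlgebra ℚ L'] {A : Matrix B B ℤ} {h e f : B → L}

variable (A) in
/-- The Chevalley relations for `h`, `e`, `f`, without the Serre relations. -/
structure ChevalleyRelations (h e f : B → L) : Prop where
  lie_h_h : ∀ i j, ⁅h i, h j⁆ = 0
  lie_e_f_self : ∀ i, ⁅e i, f i⁆ = h i
  lie_e_f_of_ne : ∀ i j, i ≠ j → ⁅e i, f j⁆ = 0
  lie_h_e : ∀ i j, ⁅h i, e j⁆ = A i j • e j
  lie_h_f : ∀ i j, ⁅h i, f j⁆ = -(A i j • f j)

variable (A) in
/-- The left-hand side of the Serre relation `ad (e i) ^ (1 - A i j) (e j) = 0`. -/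
def serreElement (e : B → L) (i j : B) : L :=
  (LieAlgebra.ad ℚ L (e i) ^ (-A i j).toNat) ⁅e i, e j⁆

theorem map_serreElement (φ : L →ₗ⁅ℚ⁆ L') (e : B → L) (i j : B) :
    φ (serreElement A e i j) = serreElement A (φ ∘ e) i j := by
  have h_pow (n : ℕ) (y : L) : φ ((LieAlgebra.ad ℚ L (e i) ^ n) y) =
      (LieAlgebra.ad ℚ L' (φ (e i)) ^ n) (φ y) := by
    induction n generalizing y with
    | zero => rfl
    | succ n ih => simp [pow_succ, ih]
  simp [serreElement, h_pow]

theorem ad_pow_apply_comm {y z : L} (h : ⁅y, z⁆ = 0) (n : ℕ) (a : L) :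
    ⁅y, (LieAlgebra.ad ℚ L z ^ n) a⁆ = (LieAlgebra.ad ℚ L z ^ n) ⁅y, a⁆ := by
  induction n with
  | zero => rfl
  | succ n ih =>
    rw [pow_succ', Module.End.mul_apply, Module.End.mul_apply, LieAlgebra.ad_apply,
      LieAlgebra.ad_apply, leibniz_lie, h, zero_lie, zero_add, ih]

theorem lie_ad_pow_succ_eq_zero {h e f y : L} {n : ℕ} (h_ef : ⁅e, f⁆ = h)
    (h_he : ⁅h, e⁆ = 2 • e) (h_hf : ⁅h, f⁆ = -(2 • f)) (h_hy : ⁅h, y⁆ = (n : ℚ) • y)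
    (h_ey : ⁅e, y⁆ = 0) : ⁅e, (LieAlgebra.ad ℚ L f ^ (n + 1)) y⁆ = 0 := by
  rcases eq_or_ne h 0 with rfl | h_ne
  · have hf : (2 : ℚ) • f = 0 := by
      rw [ofNat_smul_eq_nsmul, ← neg_eq_zero, ← h_hf, zero_lie]
    simp [(smul_eq_zero.1 hf).resolve_left two_ne_zero]
  rcases eq_or_ne y 0 with rfl | hy
  · simp
  have t : IsSl2Triple h e f := ⟨h_ne, h_ef, h_he, h_hf⟩
  have P : t.HasPrimitiveVectorWith y (n : ℚ) := ⟨hy, h_hy, h_ey⟩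
  exact (P.lie_e_pow_succ_toEnd_f n).trans (by simp)

namespace ChevalleyRelations

omit [LieAlgebra ℚ L] in
theorem swap (R : ChevalleyRelations A h e f) : ChevalleyRelations A (-h) f e where
  lie_h_h i j := by simp [R.lie_h_h]
  lie_e_f_self i := by rw [← lie_skew, R.lie_e_f_self]; rfl
  lie_e_f_of_ne i j hij := by rw [← lie_skew, R.lie_e_f_of_ne j i hij.symm, neg_zero]
  lie_h_e i j := by simp [R.lie_h_f]
  lie_h_f i j := by simp [R.lie_h_e]

theorem map (R : ChevalleyRelations A h e f) (φ : L →ₗ⁅ℚ⁆ L') :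
    ChevalleyRelations A (φ ∘ h) (φ ∘ e) (φ ∘ f) where
  lie_h_h i j := by simp [← LieHom.map_lie, R.lie_h_h]
  lie_e_f_self i := by simp [← LieHom.map_lie, R.lie_e_f_self]
  lie_e_f_of_ne i j hij := by simp [← LieHom.map_lie, R.lie_e_f_of_ne i j hij]
  lie_h_e i j := by simp only [Function.comp, ← LieHom.map_lie, R.lie_h_e, map_zsmul]
  lie_h_f i j := by simp only [Function.comp, ← LieHom.map_lie, R.lie_h_f, map_neg, map_zsmul]

theorem lie_e_serreElement (R : ChevalleyRelations A h e f) (hA : IsGCM A) {i j : B}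
    (hij : i ≠ j) (k : B) : ⁅e k, serreElement A f i j⁆ = 0 := by
  obtain ⟨n, hn⟩ : ∃ n : ℕ, A i j = -n :=
    ⟨(-A i j).toNat, by rw [Int.toNat_of_nonneg (neg_nonneg.2 (hA.2.1 i j hij)), neg_neg]⟩
  have h_toNat : (-A i j).toNat = n := by simp [hn]
  rcases eq_or_ne k i with rfl | hki
  · rw [serreElement, h_toNat, ← LieAlgebra.ad_apply ℚ L (f k), ← Module.End.mul_apply, ← pow_succ]
    refine lie_ad_pow_succ_eq_zero (R.lie_e_f_self k) ?_ ?_ ?_ (R.lie_e_f_of_ne k j hij)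
    · rw [R.lie_h_e, hA.1, ofNat_zsmul]
    · rw [R.lie_h_f, hA.1, ofNat_zsmul]
    · rw [R.lie_h_f, hn, neg_smul, neg_neg, natCast_zsmul, Nat.cast_smul_eq_nsmul]
  · have h_ki : ⁅e k, f i⁆ = 0 := R.lie_e_f_of_ne k i hki
    rw [serreElement, h_toNat, ad_pow_apply_comm h_ki, leibniz_lie, h_ki, zero_lie, zero_add]
    rcases eq_or_ne k j with rfl | hkj
    · rw [R.lie_e_f_self, ← lie_skew, R.lie_h_f, neg_neg]
      rcases n with _ | n
      · have h_zero : A k i = 0 := (hA.2.2 i k).1 (by simpa using hn)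
        simp [h_zero]
      · simp [pow_succ]
    · simp [R.lie_e_f_of_ne k j hkj]

theorem lie_f_serreElement (R : ChevalleyRelations A h e f) (hA : IsGCM A) {i j : B}
    (hij : i ≠ j) (k : B) : ⁅f k, serreElement A e i j⁆ = 0 :=
  R.swap.lie_e_serreElement hA hij k

end ChevalleyRelations

end Chevalley

section KacMoody

variable {B L : Type*} [DecidableEq B] [LieRing L] [LieAlgebra ℚ L] {A : Matrix B B ℤ}
  {h e f : B → L}

variable (A) in
/-- The quotient map from the free Lie algebra onto `g(A)`. -/
def kmMk : FreeLieAlgebra ℚ (Generators B) →ₗ⁅ℚ⁆ Matrix.ToLieAlgebra ℚ A where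
  toFun y := LieSubmodule.Quotient.mk (N := Relations.toIdeal ℚ A) y
  map_add' _ _ := rfl
  map_smul' _ _ := rfl
  map_lie' := rfl

theorem kmMk_surjective : Function.Surjective (kmMk A) := Quot.mk_surjective

theorem kmMk_eq_zero_of_mem {y : FreeLieAlgebra ℚ (Generators B)}
    (hy : y ∈ Relations.toSet ℚ A) : kmMk A y = 0 :=
  (LieSubmodule.Quotient.mk_eq_zero' (N := Relations.toIdeal ℚ A)).2
    (LieSubmodule.subset_lieSpan hy)

variable (A) in
theorem chevalleyRelations_km : ChevalleyRelations A (gH A) (gE A) (gF A) where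
  lie_h_h i j := kmMk_eq_zero_of_mem (y := Relations.HH ℚ (i, j)) (by simp [Relations.toSet])
  lie_e_f_self i := by
    have := kmMk_eq_zero_of_mem (A := A) (y := Relations.EF ℚ (i, i)) (by simp [Relations.toSet])
    rw [Relations.EF, Function.uncurry_apply_pair, if_pos rfl, map_sub, sub_eq_zero] at this
    exact this
  lie_e_f_of_ne i j hij := by
    have := kmMk_eq_zero_of_mem (A := A) (y := Relations.EF ℚ (i, j)) (by simp [Relations.toSet])
    rw [Relations.EF, Function.uncurry_apply_pair, if_neg hij] at this
    exact this
  lie_h_e i j := by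
    have := kmMk_eq_zero_of_mem (A := A) (y := Relations.HE ℚ A (i, j)) (by simp [Relations.toSet])
    rw [Relations.HE, Function.uncurry_apply_pair, map_sub, sub_eq_zero, map_zsmul] at this
    exact this
  lie_h_f i j := by
    have := kmMk_eq_zero_of_mem (A := A) (y := Relations.HF ℚ A (i, j)) (by simp [Relations.toSet])
    rw [Relations.HF, Function.uncurry_apply_pair, map_add, map_zsmul] at this
    exact eq_neg_of_add_eq_zero_left this

theorem serreElement_gE (i j : B) : serreElement A (gE A) i j = 0 := by
  rw [show gE A = kmMk A ∘ (FreeLieAlgebra.of ℚ ∘ Generators.E) from rfl, ← map_serreElement]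
  exact kmMk_eq_zero_of_mem (y := Relations.adE ℚ A (i, j)) (by simp [Relations.toSet])

theorem exists_kmLift (R : ChevalleyRelations A h e f)
    (h_e : ∀ i j, serreElement A e i j = 0) (h_f : ∀ i j, serreElement A f i j = 0) :
    ∃ φ : Matrix.ToLieAlgebra ℚ A →ₗ⁅ℚ⁆ L,
      (∀ i, φ (gH A i) = h i) ∧ (∀ i, φ (gE A i) = e i) ∧ ∀ i, φ (gF A i) = f i := by
  let ψ : FreeLieAlgebra ℚ (Generators B) →ₗ⁅ℚ⁆ L :=
    FreeLieAlgebra.lift ℚ fun | .H i => h i | .E i => e i | .F i => f i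
  have ψ_H (i) : ψ (FreeLieAlgebra.of ℚ (.H i)) = h i := FreeLieAlgebra.lift_of_apply _ _
  have ψ_E (i) : ψ (FreeLieAlgebra.of ℚ (.E i)) = e i := FreeLieAlgebra.lift_of_apply _ _
  have ψ_F (i) : ψ (FreeLieAlgebra.of ℚ (.F i)) = f i := FreeLieAlgebra.lift_of_apply _ _
  have h_ker : Relations.toIdeal ℚ A ≤ ψ.ker := by
    refine LieSubmodule.lieSpan_le.2 ?_
    rintro y (((((⟨⟨i, j⟩, rfl⟩ | ⟨⟨i, j⟩, rfl⟩) | ⟨⟨i, j⟩, rfl⟩) | ⟨⟨i, j⟩, rfl⟩) |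
      ⟨⟨i, j⟩, rfl⟩) | ⟨⟨i, j⟩, rfl⟩)
    all_goals rw [SetLike.mem_coe, LieHom.mem_ker]
    · simp [Relations.HH, ψ_H, R.lie_h_h]
    · rcases eq_or_ne i j with rfl | hij
      · simp [Relations.EF, ψ_E, ψ_F, ψ_H, R.lie_e_f_self]
      · simp [Relations.EF, hij, ψ_E, ψ_F, R.lie_e_f_of_ne i j hij]
    · simp [-zsmul_eq_mul, Relations.HE, ψ_H, ψ_E, R.lie_h_e, map_zsmul]
    · simp [-zsmul_eq_mul, Relations.HF, ψ_H, ψ_F, R.lie_h_f, map_zsmul]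
    · exact (map_serreElement ψ _ i j).trans ((congrArg (serreElement A · i j)
        (funext ψ_E)).trans (h_e i j))
    · exact (map_serreElement ψ _ i j).trans ((congrArg (serreElement A · i j)
        (funext ψ_F)).trans (h_f i j))
  let φ : Matrix.ToLieAlgebra ℚ A →ₗ⁅ℚ⁆ L :=
    { (Relations.toIdeal ℚ A).toSubmodule.liftQ ψ.toLinearMap h_ker with
      map_lie' := by
        rintro y z
        obtain ⟨y, rfl⟩ := kmMk_surjective y
        obtain ⟨z, rfl⟩ := kmMk_surjective z
        exact ψ.map_lie y z }
  exact ⟨φ, ψ_H, ψ_E, ψ_F⟩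

end KacMoody

section Conv

open Finset.HasAntidiagonal (antidiagonal mem_antidiagonal)

variable {R L : Type*} [CommRing R] [LieRing L] [LieAlgebra R L]

/-- The coefficients of the bracket `⁅u(t), v(t)⁆` of two generating functions. -/
def lieConv (u v : ℕ → L) (k : ℕ) : L := ∑ p ∈ antidiagonal k, ⁅u p.1, v p.2⁆

theorem map_lieConv_of_ladder {D : Module.End R L} (h_lie : ∀ y z, D ⁅y, z⁆ = ⁅D y, z⁆ + ⁅y, D z⁆)
    {u v : ℕ → L} (hu : ∀ k, D (u k) = (k + 1) • u (k + 1))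
    (hv : ∀ k, D (v k) = (k + 1) • v (k + 1)) (k : ℕ) :
    D (lieConv u v k) = (k + 1) • lieConv u v (k + 1) := by
  have h_left : ∑ p ∈ antidiagonal (k + 1), p.1 • ⁅u p.1, v p.2⁆ =
      ∑ p ∈ antidiagonal k, (p.1 + 1) • ⁅u (p.1 + 1), v p.2⁆ := by
    simp [Finset.Nat.sum_antidiagonal_succ]
  have h_right : ∑ p ∈ antidiagonal (k + 1), p.2 • ⁅u p.1, v p.2⁆ =
      ∑ p ∈ antidiagonal k, (p.2 + 1) • ⁅u p.1, v (p.2 + 1)⁆ := by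
    simp [Finset.Nat.sum_antidiagonal_succ']
  calc D (lieConv u v k)
      = ∑ p ∈ antidiagonal (k + 1), p.1 • ⁅u p.1, v p.2⁆ +
          ∑ p ∈ antidiagonal (k + 1), p.2 • ⁅u p.1, v p.2⁆ := by
        rw [h_left, h_right, ← Finset.sum_add_distrib, lieConv, map_sum]
        exact Finset.sum_congr rfl fun p _ => by rw [h_lie, hu, hv, nsmul_lie, lie_nsmul]
    _ = (k + 1) • lieConv u v (k + 1) := by
        rw [← Finset.sum_add_distrib, lieConv, Finset.smul_sum]
        refine Finset.sum_congr rfl fun p hp => ?_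
        rw [← add_smul, mem_antidiagonal.1 hp]

theorem map_lieConv_of_weight {D : Module.End R L} (h_lie : ∀ y z, D ⁅y, z⁆ = ⁅D y, z⁆ + ⁅y, D z⁆)
    {u v : ℕ → L} {a b c : ℤ} (hu : ∀ k, D (u k) = (a + c * k) • u k)
    (hv : ∀ k, D (v k) = (b + c * k) • v k) (k : ℕ) :
    D (lieConv u v k) = (a + b + c * k) • lieConv u v k := by
  rw [lieConv, map_sum, Finset.smul_sum]
  refine Finset.sum_congr rfl fun p hp => ?_
  rw [h_lie, hu, hv, zsmul_lie, lie_zsmul, ← add_smul, ← mem_antidiagonal.1 hp]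
  push_cast
  ring_nf

end Conv

section Ladder

variable {L : Type*} [LieRing L] [LieAlgebra ℚ L]

theorem eq_zero_of_ladder {D : Module.End ℚ L} {u : ℕ → L}
    (h : ∀ k, D (u k) = (k + 1) • u (k + 1)) (h_zero : u 0 = 0) (k : ℕ) : u k = 0 := by
  induction k with
  | zero => exact h_zero
  | succ k ih =>
    have h_smul : ((k + 1 : ℕ) : ℚ) • u (k + 1) = 0 := by
      rw [Nat.cast_smul_eq_nsmul, ← h, ih, map_zero]
    exact (smul_eq_zero.1 h_smul).resolve_left (Nat.cast_ne_zero.2 k.succ_ne_zero)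

theorem lie_eq_zero_of_ladder {E Q : L} {u : ℕ → L} (h : ∀ k, ⁅E, u k⁆ = (k + 1) • u (k + 1))
    (h_comm : ⁅E, Q⁆ = 0) (h_zero : ⁅Q, u 0⁆ = 0) (k : ℕ) : ⁅Q, u k⁆ = 0 := by
  refine eq_zero_of_ladder (D := LieAlgebra.ad ℚ L E) (u := fun k => ⁅Q, u k⁆) (fun k => ?_)
    h_zero k
  rw [LieAlgebra.ad_apply, leibniz_lie, h_comm, zero_lie, zero_add, h, lie_nsmul]

end Ladder

section Relator

open FreeAlgebra (ι)

variable {R L : Type*} [CommRing R] [LieRing L] [LieAlgebra R L]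

/-- The family `x` continued by zero. -/
def pad (x : Fin 4 → L) : ℕ → L := Function.extend Fin.val x fun _ => 0

/-- The coefficient of `t ^ k` in `ad x(t) ^ 3 x'(t)`, where `x(t) = ∑ x j t ^ j`. -/
def relator (x : Fin 4 → L) : ℕ → L :=
  lieConv (pad x) (lieConv (pad x) (lieConv (pad x) fun k => (k + 1) • pad x (k + 1)))

theorem pad_val (x : Fin 4 → L) (j : Fin 4) : pad x j = x j :=
  Fin.val_injective.extend_apply x _ j

theorem pad_of_le (x : Fin 4 → L) {k : ℕ} (hk : 4 ≤ k) : pad x k = 0 :=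
  Function.extend_apply' x _ k fun ⟨j, _⟩ => absurd j.isLt (by lia)

theorem pad_cases {P : ℕ → L → Prop} (x : Fin 4 → L) (h_lt : ∀ j : Fin 4, P j (x j))
    (h_ge : ∀ k, 4 ≤ k → P k 0) (k : ℕ) : P k (pad x k) := by
  rcases lt_or_ge k 4 with hk | hk
  · simpa [pad_val] using pad_val x ⟨k, hk⟩ ▸ h_lt ⟨k, hk⟩
  · rw [pad_of_le x hk]
    exact h_ge k hk

theorem map_pad_of_ladder {D : Module.End R L} {x : Fin 4 → L}
    (h : ∀ j : Fin 4, D (x j) = (j.val + 1) • pad x (j.val + 1)) (k : ℕ) :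
    D (pad x k) = (k + 1) • pad x (k + 1) :=
  pad_cases (P := fun k y => D y = (k + 1) • pad x (k + 1)) x h
    (fun k hk => by simp [pad_of_le x (Nat.le_succ_of_le hk)]) k

theorem map_relator_of_ladder {D : Module.End R L}
    (h_lie : ∀ y z, D ⁅y, z⁆ = ⁅D y, z⁆ + ⁅y, D z⁆) {x : Fin 4 → L}
    (h : ∀ j : Fin 4, D (x j) = (j.val + 1) • pad x (j.val + 1)) (k : ℕ) :
    D (relator x k) = (k + 1) • relator x (k + 1) := by
  have h_pad := map_pad_of_ladder h
  refine map_lieConv_of_ladder h_lie h_pad (map_lieConv_of_ladder h_lie h_pad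
    (map_lieConv_of_ladder h_lie h_pad fun k => ?_)) k
  simp [h_pad]

theorem map_relator_of_weight {D : Module.End R L}
    (h_lie : ∀ y z, D ⁅y, z⁆ = ⁅D y, z⁆ + ⁅y, D z⁆) {x : Fin 4 → L} {a c : ℤ}
    (h : ∀ j : Fin 4, D (x j) = (a + c * j.val) • x j) (k : ℕ) :
    D (relator x k) = (4 * a + c * (k + 1)) • relator x k := by
  have h_pad (k : ℕ) : D (pad x k) = (a + c * k) • pad x k :=
    pad_cases (P := fun k y => D y = (a + c * k) • y) x h (by simp) k
  have h_pad' (k : ℕ) :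
      D ((k + 1) • pad x (k + 1)) = (a + c + c * k) • (k + 1) • pad x (k + 1) := by
    rw [map_nsmul, h_pad, smul_comm]
    push_cast
    ring_nf
  rw [relator, map_lieConv_of_weight h_lie h_pad (map_lieConv_of_weight h_lie h_pad
    (map_lieConv_of_weight h_lie h_pad h_pad'))]
  ring_nf

theorem relator_zero (x : Fin 4 → L) : relator x 0 = ⁅x 0, ⁅x 0, ⁅x 0, x 1⁆⁆⁆ := by
  have h0 : pad x 0 = x 0 := pad_val x 0
  have h1 : pad x 1 = x 1 := pad_val x 1
  simp [relator, lieConv, h0, h1]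

theorem hasLieValue_relator (x : Fin 4 → L) (k : ℕ) :
    HasLieValue x 4 (relator (ι R) k) (relator x k) := by
  have h_pad (k : ℕ) : HasLieValue x 1 (pad (ι R) k) (pad x k) := by
    rcases lt_or_ge k 4 with hk | hk
    · rw [pad_val (ι R) ⟨k, hk⟩, pad_val x ⟨k, hk⟩]
      exact .letter _
    · rw [pad_of_le _ hk, pad_of_le x hk]
      exact .zero
  have h_conv {m n : ℕ} {u v : ℕ → FreeAlgebra R (Fin 4)} {u' v' : ℕ → L}
      (hu : ∀ k, HasLieValue x m (u k) (u' k)) (hv : ∀ k, HasLieValue x n (v k) (v' k)) (k : ℕ) :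
      HasLieValue x (m + n) (lieConv u v k) (lieConv u' v' k) :=
    .sum _ fun p _ => (hu p.1).lie (hv p.2)
  exact h_conv h_pad (h_conv h_pad (h_conv h_pad fun k => (h_pad (k + 1)).nsmul (k + 1))) k

end Relator

section ChevalleyOperators

open FreeAlgebra (ι)

local notation "T" => FreeAlgebra ℚ (Fin 4)
local notation "ℓ" => Algebra.lmul ℚ (FreeAlgebra ℚ (Fin 4))

/-- The operators on the free algebra by which the `e i` act. The letter `j` stands for
`ad (e 1) ^ j (e 0) / j!`, so `e 0` is multiplication by the letter `0`, and the derivation `e 1`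
sends the letter `j` to `j + 1` times the next one. -/
def opE : Fin 2 → Module.End ℚ T :=
  ![ℓ (ι ℚ 0), derivation fun j => (j.val + 1) • pad (ι ℚ) (j.val + 1)]

/-- The derivation of the free algebra multiplying each letter by its weight. -/
def weightDerivation (c : Fin 4 → ℤ) : Module.End ℚ T := derivation fun j => c j • ι ℚ j

/-- The operators on the free algebra by which the `h i` act. -/
def opH (i : Fin 2) : Module.End ℚ T :=
  weightDerivation fun j => A2hyp i 0 + A2hyp i 1 * j.val

/-- The operators on the free algebra by which the `f i` act. The entries are forced by
`⁅f 0, e 0⁆ = -h 0` and `⁅f 0, ⁅e 1, e 0⁆⁆ = -3 • e 1` for `f 0`, and by the action of `sl₂` on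
the string of `e 0` for `f 1`. -/
def opF : Fin 2 → Module.End ℚ T :=
  ![endOfLie ![-opH 0, -(3 : ℤ) • opE 1, 0, 0], derivation ![0, 3 • ι ℚ 0, 2 • ι ℚ 1, ι ℚ 2]]

theorem weightDerivation_ι (c : Fin 4 → ℤ) (j : Fin 4) :
    weightDerivation c (ι ℚ j) = c j • ι ℚ j :=
  derivation_ι _ j

theorem weightDerivation_lie_letter (c : Fin 4 → ℤ) (j : Fin 4) :
    ⁅weightDerivation c, ℓ (ι ℚ j)⁆ = c j • ℓ (ι ℚ j) := by
  rw [weightDerivation, derivation_lie_lmul, derivation_ι, map_zsmul]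

theorem weightDerivation_lie (c : Fin 4 → ℤ) {n : ℤ} {Q : Module.End ℚ T} (h_one : Q 1 = 0)
    (h : ∀ j, ⁅weightDerivation c, ⁅Q, ℓ (ι ℚ j)⁆⁆ = (n + c j) • ⁅Q, ℓ (ι ℚ j)⁆) :
    ⁅weightDerivation c, Q⁆ = n • Q := by
  refine end_ext ?_ fun j => ?_
  · rw [Ring.lie_def]
    simp [h_one, weightDerivation]
  · rw [lie_lie, h, weightDerivation_lie_letter, lie_zsmul, zsmul_lie, add_smul,
      add_sub_cancel_right]

theorem weightDerivation_lie_derivation (c : Fin 4 → ℤ) {n : ℤ} {φ : Fin 4 → T}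
    (h : ∀ j, weightDerivation c (φ j) = (n + c j) • φ j) :
    ⁅weightDerivation c, derivation φ⁆ = n • derivation φ := by
  refine weightDerivation_lie c (derivation_one φ) fun j => ?_
  rw [derivation_lie_lmul, derivation_ι, weightDerivation, derivation_lie_lmul, ← map_zsmul, ← h,
    weightDerivation]

theorem opE_one : opE 1 = derivation ![ι ℚ 1, 2 • ι ℚ 2, 3 • ι ℚ 3, 0] := by
  refine congrArg derivation (funext fun j => ?_)
  match j with
  | 0 => exact (one_smul ..).trans (pad_val (ι ℚ) 1)
  | 1 => exact congrArg (2 • ·) (pad_val (ι ℚ) 2)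
  | 2 => exact congrArg (3 • ·) (pad_val (ι ℚ) 3)
  | 3 => exact (congrArg (4 • ·) (pad_of_le (ι ℚ) le_rfl)).trans (smul_zero 4)

theorem lie_opH_opE (i j : Fin 2) : ⁅opH i, opE j⁆ = A2hyp i j • opE j := by
  match j with
  | 0 => exact (weightDerivation_lie_letter _ 0).trans (by simp [opE])
  | 1 =>
    rw [opE_one]
    refine weightDerivation_lie_derivation _ fun k => ?_
    fin_cases k <;>
      simp [-zsmul_eq_mul, -nsmul_eq_mul, weightDerivation_ι] <;> module

theorem lie_opH_opH (i j : Fin 2) : ⁅opH i, opH j⁆ = 0 := by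
  have h_comm (c d : Fin 4 → ℤ) : ⁅weightDerivation c, weightDerivation d⁆ = 0 := by
    rw [← zero_smul ℤ (weightDerivation d)]
    refine weightDerivation_lie_derivation c fun k => ?_
    rw [map_zsmul, weightDerivation_ι, zero_add, smul_comm]
  exact h_comm _ _

theorem lie_opF_zero_letter (j : Fin 4) :
    ⁅opF 0, ℓ (ι ℚ j)⁆ = ![-opH 0, -(3 : ℤ) • opE 1, 0, 0] j :=
  endOfLie_lie _ j

theorem opF_zero_one : opF 0 1 = 0 := endOfLie_one _

theorem lie_opH_opF (i j : Fin 2) : ⁅opH i, opF j⁆ = -(A2hyp i j • opF j) := by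
  rw [← neg_smul]
  match j with
  | 0 =>
    refine weightDerivation_lie _ opF_zero_one fun k => ?_
    rw [lie_opF_zero_letter]
    match k with
    | 0 => exact (lie_neg _ _).trans ((congrArg _ (lie_opH_opH i 0)).trans (by simp))
    | 1 =>
      refine (lie_zsmul _ _ _).trans ((congrArg _ (lie_opH_opE i 1)).trans ?_)
      simp only [Matrix.cons_val_one, Matrix.cons_val_zero, Fin.val_one]
      module
    | 2 | 3 => simp
  | 1 =>
    refine weightDerivation_lie_derivation _ fun k => ?_
    fin_cases k <;>
      simp [-zsmul_eq_mul, -nsmul_eq_mul, -smul_left_inj, weightDerivation_ι] <;> module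

theorem lie_opE_opF_self (i : Fin 2) : ⁅opE i, opF i⁆ = opH i := by
  match i with
  | 0 => exact (lie_skew _ _).symm.trans (neg_eq_iff_eq_neg.2 (lie_opF_zero_letter 0))
  | 1 =>
    refine (congrArg (⁅·, opF 1⁆) opE_one).trans ((lie_derivation_derivation _ _).trans
      (congrArg derivation (funext fun k => ?_)))
    fin_cases k <;> simp [-zsmul_eq_mul, -nsmul_eq_mul, A2hyp] <;> module

theorem lie_opE_opF_of_ne (i j : Fin 2) (hij : i ≠ j) : ⁅opE i, opF j⁆ = 0 := by
  match i, j with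
  | 0, 0 | 1, 1 => exact absurd rfl hij
  | 0, 1 =>
    rw [← lie_skew, neg_eq_zero]
    exact (derivation_lie_lmul _ _).trans (by simp)
  | 1, 0 =>
    refine end_ext (by simp [Ring.lie_def, opF_zero_one, opE_one]) fun k => ?_
    rw [lie_lie, lie_opF_zero_letter, opE_one, derivation_lie_lmul, derivation_ι, ← opE_one,
      zero_lie]
    have h_HE : ⁅opE 1, opH 0⁆ = (3 : ℤ) • opE 1 := by
      rw [← lie_skew, lie_opH_opE, ← neg_smul]
      rfl
    fin_cases k <;>
      simp [-zsmul_eq_mul, -nsmul_eq_mul, -Algebra.coe_lmul_eq_mul, map_nsmul,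
        lie_opF_zero_letter, h_HE]

theorem chevalleyRelations_op : ChevalleyRelations A2hyp opH opE opF where
  lie_h_h := lie_opH_opH
  lie_e_f_self := lie_opE_opF_self
  lie_e_f_of_ne := lie_opE_opF_of_ne
  lie_h_e := lie_opH_opE
  lie_h_f := lie_opH_opF

theorem opE_one_lie_lmul (a : T) : ⁅opE 1, ℓ a⁆ = ℓ (opE 1 a) :=
  derivation_lie_lmul _ a

theorem opE_one_letter (j : Fin 4) : opE 1 (ι ℚ j) = (j.val + 1) • pad (ι ℚ) (j.val + 1) :=
  derivation_ι _ j

/-- Bracketing with `opE 1` leads from the left multiplication by one letter to the next, so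
an operator commuting with `opE 0` and `opE 1` commutes with all left multiplications. -/
theorem eq_zero_of_lie_opE {Q : Module.End ℚ T} (h_one : Q 1 = 0) (h : ∀ k, ⁅opE k, Q⁆ = 0) :
    Q = 0 := by
  have h_ladder (k : ℕ) : opE 1 (pad (ι ℚ) k) = (k + 1) • pad (ι ℚ) (k + 1) :=
    map_pad_of_ladder opE_one_letter k
  have h_letter (k : ℕ) : ⁅Q, ℓ (pad (ι ℚ) k)⁆ = 0 := by
    refine lie_eq_zero_of_ladder (u := fun k => ℓ (pad (ι ℚ) k)) (fun k => ?_) (h 1) ?_ k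
    · rw [opE_one_lie_lmul, h_ladder, map_nsmul]
    · rw [← lie_skew, neg_eq_zero]
      exact (congrArg (⁅ℓ ·, Q⁆) (pad_val (ι ℚ) 0)).trans (h 0)
  exact end_ext (by simpa using h_one) fun j => by
    rw [← pad_val (ι ℚ) j, h_letter, zero_lie]

theorem isGCM_A2hyp : IsGCM A2hyp := by
  simp [IsGCM, Fin.forall_fin_two, A2hyp]

theorem serreElement_opF (i j : Fin 2) : serreElement A2hyp opF i j = 0 := by
  rcases eq_or_ne i j with rfl | hij
  · simp [serreElement]
  refine eq_zero_of_lie_opE ?_ (chevalleyRelations_op.lie_e_serreElement isGCM_A2hyp hij)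
  have h_one (i : Fin 2) : opF i 1 = 0 := by
    match i with
    | 0 => exact opF_zero_one
    | 1 => exact derivation_one _
  have h_pow (n : ℕ) : (LieAlgebra.ad ℚ _ (opF i) ^ n) ⁅opF i, opF j⁆ 1 = 0 := by
    induction n with
    | zero => simp [Ring.lie_def, h_one]
    | succ n ih =>
      rw [pow_succ', Module.End.mul_apply, LieAlgebra.ad_apply, Ring.lie_def]
      simp [h_one, ih]
  exact h_pow _

theorem serreElement_opE_zero_one :
    serreElement A2hyp opE 0 1 = -ℓ (relator (ι ℚ) 0) := by
  have h_lie : ⁅opE 0, opE 1⁆ = -ℓ (ι ℚ 1) := by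
    rw [← lie_skew, ← pad_val (ι ℚ) 1]
    exact congrArg Neg.neg ((opE_one_lie_lmul _).trans (by simp [opE_one_letter]))
  rw [relator_zero, serreElement, h_lie, map_neg, neg_inj]
  simp only [← lmul_lie_lmul]
  rfl

theorem serreElement_opE_one_zero : serreElement A2hyp opE 1 0 = 0 := by
  have h_pow (n : ℕ) (a : T) : (LieAlgebra.ad ℚ _ (opE 1) ^ n) (ℓ a) = ℓ ((opE 1 ^ n) a) := by
    induction n with
    | zero => rfl
    | succ n ih =>
      rw [pow_succ', pow_succ', Module.End.mul_apply, ih, LieAlgebra.ad_apply, opE_one_lie_lmul,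
        Module.End.mul_apply]
  calc serreElement A2hyp opE 1 0
      = (LieAlgebra.ad ℚ _ (opE 1) ^ 3) ⁅opE 1, ℓ (ι ℚ 0)⁆ := rfl
    _ = ℓ ((opE 1 ^ 3) (opE 1 (ι ℚ 0))) := by rw [opE_one_lie_lmul, h_pow]
    _ = 0 := by simp [opE_one, pow_succ, -nsmul_eq_mul]

end ChevalleyOperators

section RelatorIdeal

open FreeAlgebra (ι)

local notation "T" => FreeAlgebra ℚ (Fin 4)
local notation "ℓ" => Algebra.lmul ℚ (FreeAlgebra ℚ (Fin 4))
local notation "ρ" => relator (ι ℚ : Fin 4 → FreeAlgebra ℚ (Fin 4))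

theorem opE_one_relator (k : ℕ) : opE 1 (ρ k) = (k + 1) • ρ (k + 1) :=
  map_relator_of_ladder (derivation_lie _) opE_one_letter k

theorem opH_relator (i : Fin 2) (k : ℕ) :
    opH i (ρ k) = (4 * A2hyp i 0 + A2hyp i 1 * (k + 1)) • ρ k :=
  map_relator_of_weight (derivation_lie _) (weightDerivation_ι _) k

theorem opF_one_relator_zero : opF 1 (ρ 0) = 0 := by
  have h_zero : opF 1 (ι ℚ 0) = 0 := derivation_ι _ 0
  have h_one : opF 1 (ι ℚ 1) = 3 • ι ℚ 0 := derivation_ι _ 1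
  have h_lie (a b : T) : opF 1 ⁅a, b⁆ = ⁅opF 1 a, b⁆ + ⁅a, opF 1 b⁆ := derivation_lie _ a b
  simp only [relator_zero, h_lie, h_zero, h_one, lie_nsmul, lie_self, zero_lie, smul_zero,
    lie_zero, add_zero]

theorem opF_one_relator_succ (k : ℕ) : opF 1 (ρ (k + 1)) = (10 - k : ℤ) • ρ k := by
  have h_comm (k : ℕ) : (k + 1 : ℚ) • opF 1 (ρ (k + 1)) =
      opE 1 (opF 1 (ρ k)) - (2 * k - 10 : ℚ) • ρ k := by
    have h_H : opH 1 (ρ k) = (2 * k - 10 : ℚ) • ρ k := by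
      rw [opH_relator, ← Int.cast_smul_eq_zsmul ℚ]
      simp only [A2hyp, Matrix.of_apply, Matrix.cons_val_one, Matrix.cons_val_zero]
      push_cast
      ring_nf
    rw [← h_H, ← lie_opE_opF_self, Ring.lie_def, LinearMap.sub_apply, Module.End.mul_apply,
      Module.End.mul_apply, opE_one_relator, map_nsmul, ← Nat.cast_smul_eq_nsmul ℚ]
    simp
  have h_cancel {y z : T} (k : ℕ) (h : (k + 1 : ℚ) • y = (k + 1 : ℚ) • z) : y = z :=
    smul_right_injective _ (Nat.cast_add_one_ne_zero k) h
  refine h_cancel k ((h_comm k).trans ?_)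
  induction k with
  | zero =>
    rw [opF_one_relator_zero, map_zero]
    push_cast
    module
  | succ k ih =>
    rw [h_cancel k ((h_comm k).trans ih), map_zsmul, opE_one_relator]
    push_cast
    module

theorem lie_opF_zero_relator (k : ℕ) : ⁅opF 0, ℓ (ρ k)⁆ = 0 := by
  refine lie_eq_zero_of_ladder (u := fun k => ℓ (ρ k)) (fun k => ?_)
    (lie_opE_opF_of_ne 1 0 one_ne_zero) ?_ k
  · rw [opE_one_lie_lmul, opE_one_relator, map_nsmul]
  · rw [← neg_eq_zero, ← lie_neg, ← serreElement_opE_zero_one]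
    exact chevalleyRelations_op.lie_f_serreElement isGCM_A2hyp zero_ne_one 0

/-- The two-sided ideal of the free algebra generated by the relators. -/
def relatorIdeal : Submodule ℚ T :=
  Submodule.span ℚ {z | ∃ a k b, z = a * ρ k * b}

local notation "I" => relatorIdeal

theorem mul_relator_mul_mem (a : T) (k : ℕ) (b : T) : a * ρ k * b ∈ I :=
  Submodule.subset_span ⟨a, k, b, rfl⟩

theorem relator_mul_mem (k : ℕ) (b : T) : ρ k * b ∈ I := by
  simpa using mul_relator_mul_mem 1 k b

theorem mul_mem_relatorIdeal (a : T) {z : T} (hz : z ∈ I) : a * z ∈ I := by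
  induction hz using Submodule.span_induction with
  | mem z hz =>
    obtain ⟨a', k, b, rfl⟩ := hz
    simpa [mul_assoc] using mul_relator_mul_mem (a * a') k b
  | zero => simp
  | add y z _ _ hy hz => simpa [mul_add] using add_mem hy hz
  | smul c z _ hz => simpa using Submodule.smul_mem _ c hz

theorem map_mem_relatorIdeal {Q : Module.End ℚ T}
    (h_letter : ∀ j, ∀ z ∈ I, ⁅Q, ℓ (ι ℚ j)⁆ z ∈ I) (h_relator : ∀ k b, Q (ρ k * b) ∈ I)
    {z : T} (hz : z ∈ I) : Q z ∈ I := by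
  have h_mul (a : T) (k : ℕ) (b : T) : Q (a * ρ k * b) ∈ I := by
    induction a using word_induction with
    | word w =>
      induction w with
      | nil => simpa using h_relator k b
      | cons j w ih =>
        have := h_letter j _ (mul_relator_mul_mem (word ℚ w) k b)
        rw [lie_lmul_apply] at this
        simpa [mul_assoc] using add_mem this (mul_mem_relatorIdeal (ι ℚ j) ih)
    | add a a' ha ha' => simpa [add_mul] using add_mem ha ha'
    | smul c a ha => simpa using Submodule.smul_mem _ c ha
  induction hz using Submodule.span_induction with
  | mem z hz =>
    obtain ⟨a, k, b, rfl⟩ := hz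
    exact h_mul a k b
  | zero => simp
  | add y z _ _ hy hz => simpa using add_mem hy hz
  | smul c z _ hz => simpa using Submodule.smul_mem _ c hz

theorem derivation_mem_relatorIdeal {φ : Fin 4 → T} (h : ∀ k b, derivation φ (ρ k) * b ∈ I)
    {z : T} (hz : z ∈ I) : derivation φ z ∈ I := by
  refine map_mem_relatorIdeal (fun j z hz => ?_) (fun k b => ?_) hz
  · rw [derivation_lie_lmul]
    exact mul_mem_relatorIdeal _ hz
  · rw [derivation_mul]
    exact add_mem (h k b) (relator_mul_mem k _)

theorem opE_mem_relatorIdeal (i : Fin 2) {z : T} (hz : z ∈ I) : opE i z ∈ I := by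
  match i with
  | 0 => exact mul_mem_relatorIdeal _ hz
  | 1 =>
    refine derivation_mem_relatorIdeal (fun k b => ?_) hz
    rw [show derivation _ (ρ k) = _ from opE_one_relator k, smul_mul_assoc]
    exact nsmul_mem (relator_mul_mem _ b) _

theorem opH_mem_relatorIdeal (i : Fin 2) {z : T} (hz : z ∈ I) : opH i z ∈ I := by
  refine derivation_mem_relatorIdeal (fun k b => ?_) hz
  rw [show derivation _ (ρ k) = _ from opH_relator i k, smul_mul_assoc]
  exact zsmul_mem (relator_mul_mem _ b) _

theorem opF_mem_relatorIdeal (i : Fin 2) {z : T} (hz : z ∈ I) : opF i z ∈ I := by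
  match i with
  | 0 =>
    refine map_mem_relatorIdeal (fun j z hz => ?_) (fun k b => ?_) hz
    · rw [lie_opF_zero_letter]
      match j with
      | 0 => exact neg_mem (opH_mem_relatorIdeal 0 hz)
      | 1 => exact zsmul_mem (opE_mem_relatorIdeal 1 hz) _
      | 2 | 3 => exact zero_mem _
    · have := DFunLike.congr_fun (lie_opF_zero_relator k) b
      rw [lie_lmul_apply, LinearMap.zero_apply, sub_eq_zero] at this
      rw [this]
      exact relator_mul_mem k _
  | 1 =>
    refine derivation_mem_relatorIdeal (fun k b => ?_) hz
    match k with
    | 0 => rw [show derivation _ (ρ 0) = _ from opF_one_relator_zero, zero_mul]; exact zero_mem _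
    | k + 1 =>
      rw [show derivation _ (ρ (k + 1)) = _ from opF_one_relator_succ k, smul_mul_assoc]
      exact zsmul_mem (relator_mul_mem _ b) _

end RelatorIdeal

section QuotientAction

variable {R V : Type*} [CommRing R] [AddCommGroup V] [Module R V] (W : Submodule R V)

/-- The Lie algebra of endomorphisms preserving a submodule. -/
def stabilizer : LieSubalgebra R (Module.End R V) where
  __ := Submodule.compatibleMaps W W
  lie_mem' {P Q} hP hQ := by
    intro z hz
    rw [Submodule.mem_comap, Ring.lie_def]
    exact sub_mem (hP (hQ hz)) (hQ (hP hz))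

/-- The action of the stabilizer of a submodule on the quotient. -/
def quotientAction : stabilizer W →ₗ⁅R⁆ Module.End R (V ⧸ W) where
  __ := Submodule.mapQLinear W W
  map_lie' {P Q} := by
    ext
    rfl

theorem quotientAction_mk (Q : stabilizer W) (z : V) :
    quotientAction W Q (W.mkQ z) = W.mkQ (Q.1 z) := rfl

end QuotientAction

section KacMoodyAction

open FreeAlgebra (ι)

local notation "T" => FreeAlgebra ℚ (Fin 4)
local notation "ℓ" => Algebra.lmul ℚ (FreeAlgebra ℚ (Fin 4))

/-- The elements `ad (e 1) ^ j (e 0) / j!` of `g(A2hyp)`. -/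
def gX (j : Fin 4) : Matrix.ToLieAlgebra ℚ A2hyp :=
  (j.val.factorial : ℚ)⁻¹ • (LieAlgebra.ad ℚ _ (gE A2hyp 1) ^ j.val) (gE A2hyp 0)

theorem gX_zero : gX 0 = gE A2hyp 0 := by
  simp [gX]

theorem lie_gE_one_gX (j : Fin 4) : ⁅gE A2hyp 1, gX j⁆ = (j.val + 1) • pad gX (j.val + 1) := by
  have h_succ (k : ℕ) : ⁅gE A2hyp 1, (k.factorial : ℚ)⁻¹ •
        (LieAlgebra.ad ℚ _ (gE A2hyp 1) ^ k) (gE A2hyp 0)⁆ =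
      (k + 1) • ((k + 1).factorial : ℚ)⁻¹ •
        (LieAlgebra.ad ℚ _ (gE A2hyp 1) ^ (k + 1)) (gE A2hyp 0) := by
    rw [lie_smul, ← Nat.cast_smul_eq_nsmul ℚ, smul_smul, Nat.factorial_succ, Nat.cast_mul,
      mul_inv, mul_inv_cancel_left₀ (Nat.cast_ne_zero.2 k.succ_ne_zero), pow_succ',
      Module.End.mul_apply, LieAlgebra.ad_apply]
  refine (h_succ j).trans (congrArg _ ?_)
  match j with
  | 0 => exact (pad_val gX 1).symm
  | 1 => exact (pad_val gX 2).symm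
  | 2 => exact (pad_val gX 3).symm
  | 3 =>
    have h_serre : (LieAlgebra.ad ℚ _ (gE A2hyp 1) ^ (3 + 1)) (gE A2hyp 0) = 0 := by
      rw [pow_succ, Module.End.mul_apply]
      exact serreElement_gE (A := A2hyp) 1 0
    exact (congrArg _ h_serre).trans ((smul_zero _).trans (pad_of_le gX le_rfl).symm)

/-- The operators induced on the quotient of the free algebra by `relatorIdeal` satisfy the
defining relations of `g(A2hyp)`. -/
theorem exists_kmAction : ∃ Φ : Matrix.ToLieAlgebra ℚ A2hyp →ₗ⁅ℚ⁆ Module.End ℚ (T ⧸ relatorIdeal),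
    ∀ i z, Φ (gE A2hyp i) (relatorIdeal.mkQ z) = relatorIdeal.mkQ (opE i z) := by
  let I := relatorIdeal
  let E (i : Fin 2) : stabilizer I := ⟨opE i, fun _ => opE_mem_relatorIdeal i⟩
  let F (i : Fin 2) : stabilizer I := ⟨opF i, fun _ => opF_mem_relatorIdeal i⟩
  let H (i : Fin 2) : stabilizer I := ⟨opH i, fun _ => opH_mem_relatorIdeal i⟩
  have R : ChevalleyRelations A2hyp H E F :=
    { lie_h_h i j := Subtype.ext (lie_opH_opH i j)
      lie_e_f_self i := Subtype.ext (lie_opE_opF_self i)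
      lie_e_f_of_ne i j hij := Subtype.ext (lie_opE_opF_of_ne i j hij)
      lie_h_e i j := Subtype.ext (lie_opH_opE i j)
      lie_h_f i j := Subtype.ext (lie_opH_opF i j) }
  have h_E (i j : Fin 2) : serreElement A2hyp (quotientAction I ∘ E) i j = 0 := by
    have h_val : (serreElement A2hyp E i j).1 = serreElement A2hyp opE i j :=
      map_serreElement (stabilizer I).incl E i j
    rw [← map_serreElement]
    refine LinearMap.ext fun z => ?_
    obtain ⟨z, rfl⟩ := I.mkQ_surjective z
    rw [quotientAction_mk, h_val]
    match i, j with
    | 0, 0 | 1, 1 => simp [serreElement]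
    | 1, 0 => simp [serreElement_opE_one_zero]
    | 0, 1 =>
      rw [serreElement_opE_zero_one]
      exact (Submodule.Quotient.mk_eq_zero I).2 (neg_mem (relator_mul_mem 0 z))
  have h_F (i j : Fin 2) : serreElement A2hyp (quotientAction I ∘ F) i j = 0 := by
    have h_zero : serreElement A2hyp F i j = 0 :=
      Subtype.ext ((map_serreElement (stabilizer I).incl F i j).trans (serreElement_opF i j))
    rw [← map_serreElement, h_zero, map_zero]
  obtain ⟨Φ, -, hΦ, -⟩ := exists_kmLift (R.map (quotientAction I)) h_E h_F
  exact ⟨Φ, fun i z => by rw [hΦ]; rfl⟩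

/-- Left multiplication as an action of the free algebra on its quotient by `relatorIdeal`. -/
def lmulQuotient : T →ₗ⁅ℚ⁆ Module.End ℚ (T ⧸ relatorIdeal) :=
  (quotientAction relatorIdeal).comp
    { toFun a := ⟨ℓ a, fun _ => mul_mem_relatorIdeal a⟩
      map_add' a b := Subtype.ext (map_add ℓ a b)
      map_smul' c a := Subtype.ext (map_smul ℓ c a)
      map_lie' {a b} := Subtype.ext (lmul_lie_lmul a b).symm }

theorem lmulQuotient_mk (a z : T) :
    lmulQuotient a (relatorIdeal.mkQ z) = relatorIdeal.mkQ (a * z) := rfl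

theorem apply_gX {Φ : Matrix.ToLieAlgebra ℚ A2hyp →ₗ⁅ℚ⁆ Module.End ℚ (T ⧸ relatorIdeal)}
    (hΦ : ∀ i z, Φ (gE A2hyp i) (relatorIdeal.mkQ z) = relatorIdeal.mkQ (opE i z)) (j : Fin 4) :
    Φ (gX j) = lmulQuotient (ι ℚ j) := by
  have h_lie (a : T) : ⁅Φ (gE A2hyp 1), lmulQuotient a⁆ = lmulQuotient (opE 1 a) := by
    refine LinearMap.ext fun z => ?_
    obtain ⟨z, rfl⟩ := relatorIdeal.mkQ_surjective z
    have h_mk := congrArg relatorIdeal.mkQ (DFunLike.congr_fun (opE_one_lie_lmul a) z)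
    rw [lie_lmul_apply, map_sub, ← hΦ] at h_mk
    rw [Ring.lie_def, LinearMap.sub_apply, Module.End.mul_apply, Module.End.mul_apply, hΦ,
      lmulQuotient_mk, lmulQuotient_mk]
    exact h_mk
  have h_zero : Φ (gX 0) = lmulQuotient (ι ℚ 0) := by
    refine LinearMap.ext fun z => ?_
    obtain ⟨z, rfl⟩ := relatorIdeal.mkQ_surjective z
    rw [gX_zero, hΦ, lmulQuotient_mk]
    rfl
  have h_pad (k : ℕ) : Φ (pad gX k) - lmulQuotient (pad (ι ℚ) k) = 0 := by
    refine eq_zero_of_ladder (D := LieAlgebra.ad ℚ _ (Φ (gE A2hyp 1)))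
      (u := fun k => Φ (pad gX k) - lmulQuotient (pad (ι ℚ) k)) (fun k => ?_)
      (sub_eq_zero.2 ((congrArg Φ (pad_val gX 0)).trans
        (h_zero.trans (congrArg lmulQuotient (pad_val (ι ℚ) 0).symm)))) k
    rw [LieAlgebra.ad_apply, lie_sub, ← LieHom.map_lie, h_lie,
      ← LieAlgebra.ad_apply ℚ _ (gE A2hyp 1), map_pad_of_ladder lie_gE_one_gX,
      map_pad_of_ladder opE_one_letter, map_nsmul, map_nsmul, smul_sub]
  simpa only [pad_val, sub_eq_zero] using h_pad j

theorem bracketing_mem_relatorIdeal {a : T} (ha : dynkin ℚ gX a = 0) :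
    bracketing ℚ (Fin 4) a ∈ relatorIdeal := by
  obtain ⟨Φ, hΦ⟩ := exists_kmAction
  have h_letter : Φ ∘ gX = lmulQuotient ∘ ι ℚ := funext (apply_gX hΦ)
  have h_eq : lmulQuotient (bracketing ℚ (Fin 4) a) = 0 := by
    rw [map_dynkin, ← h_letter, ← map_dynkin, ha, map_zero]
  have h_one := DFunLike.congr_fun h_eq (relatorIdeal.mkQ 1)
  rw [lmulQuotient_mk, mul_one, LinearMap.zero_apply] at h_one
  exact (Submodule.Quotient.mk_eq_zero _).1 h_one

end KacMoodyAction

section KacMoodyStructure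

variable {B : Type*} [DecidableEq B] {A : Matrix B B ℤ}

local notation "𝔤" => Matrix.ToLieAlgebra ℚ A

theorem eq_top_of_mem {K : LieSubalgebra ℚ (Matrix.ToLieAlgebra ℚ A)} (h_h : ∀ i, gH A i ∈ K)
    (h_e : ∀ i, gE A i ∈ K) (h_f : ∀ i, gF A i ∈ K) : K = ⊤ := by
  let ψ : FreeLieAlgebra ℚ (Generators B) →ₗ⁅ℚ⁆ K :=
    FreeLieAlgebra.lift ℚ fun | .H i => ⟨_, h_h i⟩ | .E i => ⟨_, h_e i⟩ | .F i => ⟨_, h_f i⟩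
  have hψ : K.incl.comp ψ = kmMk A := by
    ext j
    cases j <;> exact congrArg Subtype.val (FreeLieAlgebra.lift_of_apply _ _)
  refine eq_top_iff.2 fun y _ => ?_
  obtain ⟨y, rfl⟩ := kmMk_surjective y
  exact hψ ▸ (ψ y).2

variable (A) in
/-- The subalgebra `𝔫₊` generated by the raising generators. -/
def raising : LieSubalgebra ℚ 𝔤 := LieSubalgebra.lieSpan ℚ _ (Set.range (gE A))

variable (A) in
/-- The subalgebra `𝔟₋` generated by the Cartan and the lowering generators. -/
def lowerBorel : LieSubalgebra ℚ 𝔤 :=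
  LieSubalgebra.lieSpan ℚ _ (Set.range (gH A) ∪ Set.range (gF A))

theorem gE_mem_raising (i : B) : gE A i ∈ raising A := LieSubalgebra.subset_lieSpan ⟨i, rfl⟩

theorem gH_mem_lowerBorel (i : B) : gH A i ∈ lowerBorel A :=
  LieSubalgebra.subset_lieSpan (.inl ⟨i, rfl⟩)

theorem gF_mem_lowerBorel (i : B) : gF A i ∈ lowerBorel A :=
  LieSubalgebra.subset_lieSpan (.inr ⟨i, rfl⟩)

theorem lie_gE_mem_of_mem_lowerBorel (i : B) {b : 𝔤} (hb : b ∈ lowerBorel A) :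
    ∃ c : ℚ, ⁅gE A i, b⁆ - c • gE A i ∈ lowerBorel A := by
  have R := chevalleyRelations_km A
  induction hb using LieSubalgebra.lieSpan_induction with
  | mem b hb =>
    rcases hb with ⟨j, rfl⟩ | ⟨j, rfl⟩
    · refine ⟨-A j i, ?_⟩
      rw [← lie_skew, R.lie_h_e, neg_smul, Int.cast_smul_eq_zsmul, sub_self]
      exact zero_mem _
    · refine ⟨0, ?_⟩
      rw [zero_smul, sub_zero]
      rcases eq_or_ne i j with rfl | hij
      · exact R.lie_e_f_self i ▸ gH_mem_lowerBorel i
      · exact R.lie_e_f_of_ne i j hij ▸ zero_mem _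
  | zero => exact ⟨0, by simp⟩
  | add b b' _ _ hb hb' =>
    obtain ⟨c, hc⟩ := hb
    obtain ⟨c', hc'⟩ := hb'
    refine ⟨c + c', ?_⟩
    convert add_mem hc hc' using 1
    rw [lie_add]
    module
  | smul r b _ hb =>
    obtain ⟨c, hc⟩ := hb
    refine ⟨r * c, ?_⟩
    convert (lowerBorel A).smul_mem r hc using 1
    rw [lie_smul]
    module
  | lie b b' hb hb' ih ih' =>
    obtain ⟨c, hc⟩ := ih
    obtain ⟨c', hc'⟩ := ih'
    refine ⟨0, ?_⟩
    convert add_mem (add_mem ((lowerBorel A).lie_mem hc hb') ((lowerBorel A).lie_mem hb hc'))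
      (sub_mem ((lowerBorel A).smul_mem c hc') ((lowerBorel A).smul_mem c' hc)) using 1
    rw [leibniz_lie, sub_lie, lie_sub, smul_lie, lie_smul, ← lie_skew (gE A i) b]
    module

theorem lie_mem_of_mem_lieSpan {L : Type*} [LieRing L] [LieAlgebra ℚ L] {s : Set L}
    {S : Submodule ℚ L} {y : L} (h_gen : ∀ z ∈ s, ⁅y, z⁆ ∈ S)
    (h_lie : ∀ n ∈ LieSubalgebra.lieSpan ℚ L s, ∀ z ∈ S, ⁅n, z⁆ ∈ S)
    {n : L} (hn : n ∈ LieSubalgebra.lieSpan ℚ L s) : ⁅y, n⁆ ∈ S := by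
  induction hn using LieSubalgebra.lieSpan_induction with
  | mem z hz => exact h_gen z hz
  | zero => simp
  | add z z' _ _ hz hz' => exact lie_add y z z' ▸ add_mem hz hz'
  | smul r z _ hz => exact lie_smul r y z ▸ S.smul_mem r hz
  | lie z z' hz hz' ih ih' =>
    rw [leibniz_lie, ← lie_skew _ z']
    exact add_mem (neg_mem (h_lie z' hz' _ ih)) (h_lie z hz _ ih')

variable (A) in
theorem raising_sup_lowerBorel : (raising A).toSubmodule ⊔ (lowerBorel A).toSubmodule = ⊤ := by
  set S := (raising A).toSubmodule ⊔ (lowerBorel A).toSubmodule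
  have h_raising {z} (hz : z ∈ raising A) : z ∈ S := Submodule.mem_sup_left hz
  have h_lower {z} (hz : z ∈ lowerBorel A) : z ∈ S := Submodule.mem_sup_right hz
  let K : LieSubalgebra ℚ (Matrix.ToLieAlgebra ℚ A) :=
    (stabilizer S).comap (LieAlgebra.ad ℚ (Matrix.ToLieAlgebra ℚ A))
  have mem_K {y} (h_left : ∀ z ∈ raising A, ⁅y, z⁆ ∈ S) (h_right : ∀ z ∈ lowerBorel A, ⁅y, z⁆ ∈ S) :
      y ∈ K :=
    sup_le (a := (raising A).toSubmodule) (c := S.comap (LieAlgebra.ad ℚ _ y)) h_left h_right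
  have lie_gE_mem (i) {z} (hz : z ∈ lowerBorel A) : ⁅gE A i, z⁆ ∈ S := by
    obtain ⟨c, hc⟩ := lie_gE_mem_of_mem_lowerBorel i hz
    rw [← sub_add_cancel ⁅gE A i, z⁆ (c • gE A i)]
    exact add_mem (h_lower hc) (S.smul_mem c (h_raising (gE_mem_raising i)))
  have h_raising_K : raising A ≤ K := by
    refine LieSubalgebra.lieSpan_le.2 (Set.range_subset_iff.2 fun i => ?_)
    exact mem_K (fun z hz => h_raising ((raising A).lie_mem (gE_mem_raising i) hz))
      fun z hz => lie_gE_mem i hz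
  have h_lower_K {y} (hy : y ∈ lowerBorel A) : y ∈ K := by
    refine mem_K (fun z hz => lie_mem_of_mem_lieSpan ?_ (fun n hn => h_raising_K hn) hz)
      fun z hz => h_lower ((lowerBorel A).lie_mem hy hz)
    rintro _ ⟨j, rfl⟩
    exact lie_skew y (gE A j) ▸ neg_mem (lie_gE_mem j hy)
  have h_K : K = ⊤ := eq_top_of_mem (fun i => h_lower_K (gH_mem_lowerBorel i))
    (fun i => h_raising_K (gE_mem_raising i)) (fun i => h_lower_K (gF_mem_lowerBorel i))
  let S' : LieSubalgebra ℚ (Matrix.ToLieAlgebra ℚ A) :=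
    { S with lie_mem' := fun {y z} _ hz => (h_K ▸ LieSubalgebra.mem_top y : y ∈ K) hz }
  have h_S' : S' = ⊤ := eq_top_of_mem (fun i => h_lower (gH_mem_lowerBorel i))
    (fun i => h_raising (gE_mem_raising i)) (fun i => h_lower (gF_mem_lowerBorel i))
  exact congrArg LieSubalgebra.toSubmodule h_S'

end KacMoodyStructure

section RootSpaces

variable {B : Type*} [Fintype B] [DecidableEq B] {A : Matrix B B ℤ}

theorem mem_rootSpace {n : B → ℤ} {y : Matrix.ToLieAlgebra ℚ A} :
    y ∈ rootSpace A n ↔ ∀ i, ⁅gH A i, y⁆ = (A.mulVec n i) • y := by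
  simp [rootSpace, Matrix.mulVec, dotProduct, -zsmul_eq_mul, ← Int.cast_smul_eq_zsmul ℚ]

theorem lie_mem_rootSpace {m n : B → ℤ} {y z : Matrix.ToLieAlgebra ℚ A} (hy : y ∈ rootSpace A m)
    (hz : z ∈ rootSpace A n) : ⁅y, z⁆ ∈ rootSpace A (m + n) := by
  rw [mem_rootSpace] at *
  intro i
  rw [leibniz_lie, hy, hz, zsmul_lie, lie_zsmul, Matrix.mulVec_add, Pi.add_apply, add_smul]

theorem gH_mem_rootSpace (i : B) : gH A i ∈ rootSpace A 0 :=
  mem_rootSpace.2 fun j => by simp [(chevalleyRelations_km A).lie_h_h]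

theorem gE_mem_rootSpace (i : B) : gE A i ∈ rootSpace A (Pi.single i 1) :=
  mem_rootSpace.2 fun j => by simp [(chevalleyRelations_km A).lie_h_e, -zsmul_eq_mul]

theorem gF_mem_rootSpace (i : B) : gF A i ∈ rootSpace A (-Pi.single i 1) :=
  mem_rootSpace.2 fun j => by
    simp [(chevalleyRelations_km A).lie_h_f, Matrix.mulVec_neg, -zsmul_eq_mul]

variable (A) in
/-- The sum of the root spaces of the weights in a semigroup. -/
def rootSubalgebra (M : AddSubsemigroup (B → ℤ)) : LieSubalgebra ℚ (Matrix.ToLieAlgebra ℚ A) where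
  __ := ⨆ p : M, rootSpace A p
  lie_mem' {y z} hy hz := by
    change ⁅y, z⁆ ∈ ⨆ p : M, rootSpace A p
    induction hy using Submodule.iSup_induction' with
    | mem p y hy =>
      induction hz using Submodule.iSup_induction' with
      | mem q z hz =>
        exact Submodule.mem_iSup_of_mem (p := fun p : M => rootSpace A p) (p + q)
          (lie_mem_rootSpace hy hz)
      | zero => simp
      | add z z' _ _ hz hz' => exact (lie_add y z z').symm ▸ add_mem hz hz'
    | zero => simp
    | add y y' _ _ hy hy' => exact (add_lie y y' z).symm ▸ add_mem hy hy'

theorem mem_rootSubalgebra {M : AddSubsemigroup (B → ℤ)} {p : B → ℤ} (hp : p ∈ M)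
    {y : Matrix.ToLieAlgebra ℚ A} (hy : y ∈ rootSpace A p) : y ∈ rootSubalgebra A M :=
  Submodule.mem_iSup_of_mem (p := fun p : M => rootSpace A p) ⟨p, hp⟩ hy

theorem lowerBorel_le (i : B) : (lowerBorel A).toSubmodule ≤ ⨆ p : {p : B → ℤ // p i ≤ 0},
    rootSpace A p := by
  let M : AddSubsemigroup (B → ℤ) :=
    { carrier := {p | p i ≤ 0}
      add_mem' := fun {p q} (hp : p i ≤ 0) (hq : q i ≤ 0) => add_nonpos hp hq }
  have h_le : lowerBorel A ≤ rootSubalgebra A M := by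
    refine LieSubalgebra.lieSpan_le.2 ?_
    rintro _ (⟨j, rfl⟩ | ⟨j, rfl⟩)
    · exact mem_rootSubalgebra (M := M) (le_refl (0 : ℤ)) (gH_mem_rootSpace j)
    · have h_single : 0 ≤ (Pi.single j 1 : B → ℤ) := Pi.single_nonneg.2 zero_le_one
      exact mem_rootSubalgebra (M := M) (neg_nonpos.2 (h_single i)) (gF_mem_rootSpace j)
  exact h_le

theorem iSupIndep_rootSpace (hA : A.det ≠ 0) : iSupIndep (rootSpace A) := by
  have h_inj : Function.Injective fun (n : B → ℤ) i => ((∑ j, A i j * n j : ℤ) : ℚ) := by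
    intro m n hmn
    refine sub_eq_zero.1 (Matrix.eq_zero_of_mulVec_eq_zero hA (v := m - n) ?_)
    rw [Matrix.mulVec_sub, sub_eq_zero]
    exact funext fun i => Int.cast_injective (congrFun hmn i)
  refine ((Module.End.independent_iInf_maxGenEigenspace_of_forall_mapsTo
    (fun i => LieAlgebra.ad ℚ _ (gH A i)) fun i j μ =>
      Module.End.mapsTo_maxGenEigenspace_of_comm ?_ μ).comp h_inj).mono fun n =>
    iInf_mono fun i => Module.End.eigenspace_le_maxGenEigenspace
  rw [commute_iff_lie_eq, ← LieHom.map_lie, (chevalleyRelations_km A).lie_h_h, map_zero]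

end RootSpaces

theorem iSupIndep_inf_iSup_le {α ι : Type*} [CompleteLattice α] [IsModularLattice α]
    {W C : ι → α} (hW : iSupIndep W) (hC : C ≤ W) (p : ι) : W p ⊓ ⨆ q, C q ≤ C p := by
  have h_disjoint : (⨆ (q) (_ : q ≠ p), C q) ⊓ W p = ⊥ :=
    ((hW p).mono_right (iSup₂_mono fun q _ => hC q)).symm.eq_bot
  rw [inf_comm, iSup_split_single C p, sup_inf_assoc_of_le _ (hC p), h_disjoint, sup_bot_eq]

section Homogeneous

open FreeAlgebra (ι)

local notation "T" => FreeAlgebra ℚ (Fin 4)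

/-- The bidegree of a word: its length and the sum of its letters. The letter `j` stands for the
root vector `gX j` of weight `![1, j]`. -/
def weight (w : List (Fin 4)) : Fin 2 → ℤ := (w.map fun j => ![1, (j.val : ℤ)]).sum

/-- The homogeneous component of bidegree `p` of the free algebra. -/
def homog (p : Fin 2 → ℤ) : Submodule ℚ T := Submodule.span ℚ (word ℚ '' (weight ⁻¹' {p}))

@[simp] theorem weight_nil : weight [] = 0 := rfl

theorem weight_cons (j : Fin 4) (w : List (Fin 4)) :
    weight (j :: w) = ![1, (j.val : ℤ)] + weight w := by
  simp [weight]

theorem weight_append (u w : List (Fin 4)) : weight (u ++ w) = weight u + weight w := by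
  simp [weight]

theorem weight_eq (w : List (Fin 4)) :
    weight w = ![(w.length : ℤ), ((w.map Fin.val).sum : ℕ)] := by
  induction w with
  | nil => ext i; match i with | 0 | 1 => rfl
  | cons j w ih =>
    rw [weight_cons, ih]
    ext i
    match i with
    | 0 => simp [add_comm]
    | 1 => simp

@[simp] theorem weight_apply_zero (w : List (Fin 4)) : weight w 0 = w.length := by
  simp [weight_eq]

theorem word_mem_homog (w : List (Fin 4)) : word ℚ w ∈ homog (weight w) :=
  Submodule.subset_span ⟨w, rfl, rfl⟩

theorem ι_mem_homog (j : Fin 4) : ι ℚ j ∈ homog ![1, (j.val : ℤ)] := by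
  simpa [weight] using word_mem_homog [j]

theorem mul_mem_homog {p q : Fin 2 → ℤ} {a b : T} (ha : a ∈ homog p) (hb : b ∈ homog q) :
    a * b ∈ homog (p + q) := by
  have h_mul : homog p * homog q ≤ homog (p + q) := by
    rw [homog, homog, Submodule.span_mul_span, Submodule.span_le]
    rintro _ ⟨_, ⟨u, rfl, rfl⟩, _, ⟨w, rfl, rfl⟩, rfl⟩
    simpa only [word_append, weight_append, SetLike.mem_coe] using word_mem_homog (u ++ w)
  exact h_mul (Submodule.mul_mem_mul ha hb)

theorem lie_mem_homog {p q : Fin 2 → ℤ} {a b : T} (ha : a ∈ homog p) (hb : b ∈ homog q) :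
    ⁅a, b⁆ ∈ homog (p + q) :=
  sub_mem (mul_mem_homog ha hb) (add_comm q p ▸ mul_mem_homog hb ha)

theorem adAction_word_mem_homog (u : List (Fin 4)) {q : Fin 2 → ℤ} {a : T} (ha : a ∈ homog q) :
    adAction ℚ (ι ℚ) (word ℚ u) a ∈ homog (weight u + q) := by
  induction u with
  | nil => simpa using ha
  | cons j u ih =>
    rw [word_cons, map_mul, Module.End.mul_apply, adAction_ι, weight_cons, add_assoc]
    exact lie_mem_homog (ι_mem_homog j) ih

theorem lieConv_mem_homog {u v : ℕ → T} {m n r s : ℤ} (hu : ∀ k : ℕ, u k ∈ homog ![m, k + r])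
    (hv : ∀ k : ℕ, v k ∈ homog ![n, k + s]) (k : ℕ) :
    lieConv u v k ∈ homog ![m + n, k + (r + s)] := by
  refine sum_mem fun p hp => ?_
  convert lie_mem_homog (hu p.1) (hv p.2) using 2
  rw [← Finset.HasAntidiagonal.mem_antidiagonal.1 hp]
  simp [add_add_add_comm]

theorem relator_mem_homog (k : ℕ) : relator (ι ℚ) k ∈ homog ![4, (k : ℤ) + 1] := by
  have h_pad (k : ℕ) : pad (ι ℚ) k ∈ homog ![1, (k : ℤ)] :=
    pad_cases (P := fun k y => y ∈ homog ![1, (k : ℤ)]) _ ι_mem_homog (fun _ _ => zero_mem _) k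
  have h_pad' (k : ℕ) : pad (ι ℚ) k ∈ homog ![1, (k : ℤ) + 0] := by simpa using h_pad k
  have h_deriv (k : ℕ) : (k + 1) • pad (ι ℚ) (k + 1) ∈ homog ![1, (k : ℤ) + 1] :=
    nsmul_mem (by simpa using h_pad (k + 1)) _
  simpa [relator] using lieConv_mem_homog h_pad' (lieConv_mem_homog h_pad'
    (lieConv_mem_homog h_pad' h_deriv)) k

theorem iSupIndep_homog : iSupIndep homog := fun p => by
  have h_word : (word ℚ : List (Fin 4) → T) = wordBasis ℚ (Fin 4) :=
    funext fun w => (wordBasis_apply w).symm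
  simp only [homog, ← Submodule.span_iUnion₂, h_word, ← Set.image_iUnion₂]
  refine (wordBasis ℚ (Fin 4)).linearIndependent.disjoint_span_image ?_
  rw [Set.disjoint_iUnion₂_right]
  exact fun q hqp => (Set.disjoint_singleton.2 hqp.symm).preimage weight

theorem iSup_homog : ⨆ p, homog p = ⊤ := by
  refine eq_top_iff.2 fun a _ => ?_
  induction a using word_induction with
  | word w => exact Submodule.mem_iSup_of_mem _ (word_mem_homog w)
  | add a b ha hb => exact add_mem (ha trivial) (hb trivial)
  | smul c a ha => exact Submodule.smul_mem _ c (ha trivial)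

theorem gX_mem_rootSpace (j : Fin 4) : gX j ∈ rootSpace A2hyp ![1, (j.val : ℤ)] := by
  have h_pow (k : ℕ) : (LieAlgebra.ad ℚ _ (gE A2hyp 1) ^ k) (gE A2hyp 0) ∈
      rootSpace A2hyp ![1, (k : ℤ)] := by
    induction k with
    | zero =>
      convert gE_mem_rootSpace (A := A2hyp) 0 using 2
      · ext i
        match i with | 0 | 1 => rfl
      · simp
    | succ k ih =>
      rw [pow_succ', Module.End.mul_apply, LieAlgebra.ad_apply]
      convert lie_mem_rootSpace (gE_mem_rootSpace 1) ih using 2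
      ext i
      match i with
      | 0 => rfl
      | 1 => simp [add_comm]
  exact Submodule.smul_mem _ _ (h_pow j)

theorem rightNormed_gX_mem_rootSpace (w : List (Fin 4)) :
    rightNormed gX w ∈ rootSpace A2hyp (weight w) := by
  match w with
  | [] => exact zero_mem _
  | [j] => simpa [weight, rightNormed] using gX_mem_rootSpace j
  | j :: k :: w =>
    exact lie_mem_rootSpace (gX_mem_rootSpace j) (rightNormed_gX_mem_rootSpace (k :: w))

end Homogeneous

section PositivePart

theorem relator_gX (k : ℕ) : relator gX k = 0 := by
  refine eq_zero_of_ladder (map_relator_of_ladder (D := LieAlgebra.ad ℚ _ (gE A2hyp 1))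
    (leibniz_lie (gE A2hyp 1)) lie_gE_one_gX) ?_ k
  have h_gX_one : gX 1 = -⁅gE A2hyp 0, gE A2hyp 1⁆ := by
    rw [lie_skew]
    simp [gX]
  have h_serre : ⁅gE A2hyp 0, ⁅gE A2hyp 0, ⁅gE A2hyp 0, ⁅gE A2hyp 0, gE A2hyp 1⁆⁆⁆⁆ = 0 :=
    serreElement_gE (A := A2hyp) 0 1
  rw [relator_zero, gX_zero, h_gX_one, lie_neg, lie_neg, lie_neg, h_serre, neg_zero]

theorem exists_sub_smul_gE_one_mem_range_dynkin {y : Matrix.ToLieAlgebra ℚ A2hyp}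
    (hy : y ∈ raising A2hyp) : ∃ c : ℚ, y - c • gE A2hyp 1 ∈ (dynkin ℚ gX).range := by
  have h_e {z} : z ∈ (dynkin ℚ gX).range → ⁅gE A2hyp 1, z⁆ ∈ (dynkin ℚ gX).range :=
    lie_mem_range_dynkin_of_letter gX fun j => lie_gE_one_gX j ▸ nsmul_mem
      (pad_cases (P := fun _ z => z ∈ (dynkin ℚ gX).range) gX (mem_range_dynkin gX)
        (fun _ _ => zero_mem _) _) _
  induction hy using LieSubalgebra.lieSpan_induction with
  | mem y hy =>
    obtain ⟨i, rfl⟩ := hy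
    match i with
    | 0 => exact ⟨0, by simpa [gX_zero] using mem_range_dynkin (R := ℚ) gX 0⟩
    | 1 => exact ⟨1, by simp⟩
  | zero => exact ⟨0, by simp⟩
  | add y z _ _ hy hz =>
    obtain ⟨c, hc⟩ := hy
    obtain ⟨d, hd⟩ := hz
    exact ⟨c + d, by convert add_mem hc hd using 1; module⟩
  | smul r y _ hy =>
    obtain ⟨c, hc⟩ := hy
    exact ⟨r * c, by convert Submodule.smul_mem _ r hc using 1; module⟩
  | lie y z _ _ hy hz =>
    obtain ⟨c, hc⟩ := hy
    obtain ⟨d, hd⟩ := hz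
    refine ⟨0, ?_⟩
    convert add_mem (lie_mem_range_dynkin gX hc hd) (sub_mem
      (Submodule.smul_mem _ c (h_e hd)) (Submodule.smul_mem _ d (h_e hc))) using 1
    simp only [lie_sub, sub_lie, smul_lie, lie_smul, lie_self, ← lie_skew (gE A2hyp 1) y]
    module

theorem map_dynkin_homog_le (p : Fin 2 → ℤ) :
    (homog p).map (dynkin ℚ gX) ≤ rootSpace A2hyp p := by
  rw [homog, Submodule.map_span_le]
  rintro _ ⟨w, rfl, rfl⟩
  rw [dynkin_word]
  exact rightNormed_gX_mem_rootSpace w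

theorem map_dynkin_homog {p : Fin 2 → ℤ} (hp : 0 < p 0) :
    (homog p).map (dynkin ℚ gX) = rootSpace A2hyp p := by
  refine le_antisymm (map_dynkin_homog_le p) ?_
  let C (q : Fin 2 → ℤ) : Submodule ℚ (Matrix.ToLieAlgebra ℚ A2hyp) :=
    if 0 < q 0 then (homog q).map (dynkin ℚ gX) else rootSpace A2hyp q
  have hC (q) : (homog q).map (dynkin ℚ gX) ≤ C q ∧ C q ≤ rootSpace A2hyp q := by
    by_cases hq : 0 < q 0 <;> simp [C, hq, map_dynkin_homog_le]
  have h_nonpos {q : Fin 2 → ℤ} (hq : q 0 ≤ 0) : rootSpace A2hyp q ≤ ⨆ q, C q :=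
    le_iSup_of_le q (by simp [C, hq.not_gt])
  have h_range : (dynkin ℚ gX).range ≤ ⨆ q, C q := by
    rw [LinearMap.range_eq_map, ← iSup_homog, Submodule.map_iSup]
    exact iSup_mono fun q => (hC q).1
  have h_top : ⨆ q, C q = ⊤ := by
    rw [← top_le_iff, ← raising_sup_lowerBorel A2hyp]
    refine sup_le (fun y hy => ?_) ((lowerBorel_le 0).trans (iSup_le fun q => h_nonpos q.2))
    obtain ⟨c, hc⟩ := exists_sub_smul_gE_one_mem_range_dynkin hy
    rw [← sub_add_cancel y (c • gE A2hyp 1)]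
    exact add_mem (h_range hc) (Submodule.smul_mem _ c (h_nonpos (by simp) (gE_mem_rootSpace 1)))
  have h_det : A2hyp.det ≠ 0 := by simp [A2hyp, Matrix.det_fin_two]
  simpa [h_top, C, hp] using
    iSupIndep_inf_iSup_le (iSupIndep_rootSpace h_det) (fun q => (hC q).2) p

end PositivePart

section Relations

open FreeAlgebra (ι)

local notation "T" => FreeAlgebra ℚ (Fin 4)
local notation "θ" => bracketing ℚ (Fin 4)

/-- The homogeneous component of bidegree `p` of the ideal generated by the relators in the free
Lie algebra on four letters, realized inside the free algebra. -/
def relatorComponent (p : Fin 2 → ℤ) : Submodule ℚ T :=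
  Submodule.span ℚ {z | ∃ (u : List (Fin 4)) (k : ℕ), weight u + ![4, (k : ℤ) + 1] = p ∧
    adAction ℚ (ι ℚ) (word ℚ u) (relator (ι ℚ) k) = z}

theorem relatorComponent_le_homog : relatorComponent ≤ homog := fun p => by
  refine Submodule.span_le.2 ?_
  rintro _ ⟨u, k, rfl, rfl⟩
  exact adAction_word_mem_homog u (relator_mem_homog k)

theorem dynkin_gX_of_mem_relatorComponent {p : Fin 2 → ℤ} {z : T} (hz : z ∈ relatorComponent p) :
    dynkin ℚ gX z = 0 := by
  suffices relatorComponent p ≤ (dynkin ℚ gX).ker from this hz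
  refine Submodule.span_le.2 ?_
  rintro _ ⟨u, k, rfl, rfl⟩
  simp [((hasLieValue_relator gX k).adAction_word u).dynkin_eq, relator_gX]

theorem bracketing_of_mem_relatorComponent {p : Fin 2 → ℤ} {z : T} (hz : z ∈ relatorComponent p) :
    θ z = p 0 • z := by
  suffices relatorComponent p ≤ LinearMap.eqLocus θ (p 0 • LinearMap.id) from this hz
  refine Submodule.span_le.2 ?_
  rintro _ ⟨u, k, rfl, rfl⟩
  refine ((hasLieValue_relator (ι ℚ) k).adAction_word u).dynkin_eq.trans ?_
  rw [← natCast_zsmul]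
  simp [-zsmul_eq_mul, -nsmul_eq_mul]

theorem dynkin_bracketing {L : Type*} [LieRing L] [LieAlgebra ℚ L] (x : Fin 4 → L)
    {p : Fin 2 → ℤ} {a : T} (ha : a ∈ homog p) :
    dynkin ℚ x (θ a) = p 0 • dynkin ℚ x a := by
  suffices homog p ≤ LinearMap.eqLocus (dynkin ℚ x ∘ₗ θ) (p 0 • dynkin ℚ x) from this ha
  refine Submodule.span_le.2 ?_
  rintro _ ⟨w, rfl, rfl⟩
  simp [(hasLieValue_rightNormed x w).dynkin_eq]

theorem rightNormed_mem_homog (w : List (Fin 4)) : rightNormed (ι ℚ) w ∈ homog (weight w) := by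
  match w with
  | [] => exact zero_mem _
  | [j] => simpa [weight, rightNormed] using ι_mem_homog j
  | j :: k :: w =>
    rw [weight_cons]
    exact lie_mem_homog (ι_mem_homog j) (rightNormed_mem_homog (k :: w))

theorem bracketing_mem_homog {p : Fin 2 → ℤ} {a : T} (ha : a ∈ homog p) : θ a ∈ homog p := by
  suffices homog p ≤ (homog p).comap θ from this ha
  refine Submodule.span_le.2 ?_
  rintro _ ⟨w, rfl, rfl⟩
  simpa using rightNormed_mem_homog w

theorem adAction_relator_mem (a : T) (k : ℕ) :
    adAction ℚ (ι ℚ) a (relator (ι ℚ) k) ∈ ⨆ p, relatorComponent p := by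
  induction a using word_induction with
  | word u => exact Submodule.mem_iSup_of_mem _ (Submodule.subset_span ⟨u, k, rfl, rfl⟩)
  | add a b ha hb => simpa using add_mem ha hb
  | smul c a ha => simpa using Submodule.smul_mem _ c ha

theorem bracketing_mul_relator_mul (a b : T) (k : ℕ) :
    θ (a * relator (ι ℚ) k * b) = adAction ℚ (ι ℚ)
      (a * (algebraMap ℚ T (4 * FreeAlgebra.algebraMapInv b) - θ b)) (relator (ι ℚ) k) := by
  have hρ := hasLieValue_relator (R := ℚ) (ι ℚ) k
  rw [mul_assoc, dynkin_mul, dynkin_mul, hρ.adAction_eq, hρ.dynkin_eq, map_mul, map_mul, map_sub,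
    adAction_bracketing, hρ.algebraMapInv_eq, AlgHom.commutes, Module.End.mul_apply,
    LinearMap.sub_apply, LieAlgebra.ad_apply, LieAlgebra.ad_apply, ← lie_skew (θ b)]
  simp [Algebra.algebraMap_eq_smul_one, mul_smul, sub_eq_add_neg, ofNat_smul_eq_nsmul, add_comm]

theorem bracketing_mem_relatorComponent {p : Fin 2 → ℤ} (hp : p 0 ≠ 0) {a : T} (ha : a ∈ homog p)
    (h : dynkin ℚ gX a = 0) : θ a ∈ relatorComponent p := by
  have h_ideal : relatorIdeal ≤ (⨆ q, relatorComponent q).comap θ := by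
    refine Submodule.span_le.2 ?_
    rintro _ ⟨b, k, c, rfl⟩
    simpa only [SetLike.mem_coe, Submodule.mem_comap, bracketing_mul_relator_mul] using
      adAction_relator_mem _ k
  have h_smul : (p 0 : ℚ) • θ a ∈ ⨆ q, relatorComponent q := by
    rw [Int.cast_smul_eq_zsmul, ← dynkin_bracketing _ ha]
    exact h_ideal (bracketing_mem_relatorIdeal h)
  have h_mem := (Submodule.smul_mem_iff _ (Int.cast_ne_zero.2 hp)).1 h_smul
  exact iSupIndep_inf_iSup_le iSupIndep_homog relatorComponent_le_homog p
    ⟨bracketing_mem_homog ha, h_mem⟩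

/-- The homogeneous component of bidegree `p` of the free Lie algebra on four letters. -/
def lieComponent (p : Fin 2 → ℤ) : Submodule ℚ T := (homog p).map θ

theorem lieComponent_le_homog (p : Fin 2 → ℤ) : lieComponent p ≤ homog p :=
  Submodule.map_le_iff_le_comap.2 fun _ => bracketing_mem_homog

theorem bracketing_of_mem_lieComponent {p : Fin 2 → ℤ} {z : T} (hz : z ∈ lieComponent p) :
    θ z = p 0 • z := by
  obtain ⟨a, ha, rfl⟩ := hz
  exact dynkin_bracketing _ ha

theorem mem_lieComponent {p : Fin 2 → ℤ} (hp : p 0 ≠ 0) {z : T} :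
    z ∈ lieComponent p ↔ z ∈ homog p ∧ θ z = p 0 • z := by
  refine ⟨fun hz => ⟨lieComponent_le_homog p hz, bracketing_of_mem_lieComponent hz⟩,
    fun ⟨hz, h⟩ => ?_⟩
  rw [← Submodule.smul_mem_iff (lieComponent p) (Int.cast_ne_zero.2 hp : (p 0 : ℚ) ≠ 0),
    Int.cast_smul_eq_zsmul, ← h]
  exact ⟨z, hz, rfl⟩

theorem lieComponent_inf_ker {p : Fin 2 → ℤ} (hp : p 0 ≠ 0) :
    lieComponent p ⊓ (dynkin ℚ gX).ker = relatorComponent p := by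
  refine le_antisymm (fun z ⟨hz, h⟩ => ?_) fun z hz => ⟨(mem_lieComponent hp).2
    ⟨relatorComponent_le_homog p hz, bracketing_of_mem_relatorComponent hz⟩,
    dynkin_gX_of_mem_relatorComponent hz⟩
  rw [← Submodule.smul_mem_iff _ (Int.cast_ne_zero.2 hp : (p 0 : ℚ) ≠ 0), Int.cast_smul_eq_zsmul,
    ← bracketing_of_mem_lieComponent hz]
  exact bracketing_mem_relatorComponent hp (lieComponent_le_homog p hz) h

theorem map_dynkin_lieComponent {p : Fin 2 → ℤ} (hp : 0 < p 0) :
    (lieComponent p).map (dynkin ℚ gX) = rootSpace A2hyp p := by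
  have h_smul : ∀ a ∈ homog p, dynkin ℚ gX (θ a) = (p 0 : ℚ) • dynkin ℚ gX a := fun a ha => by
    rw [dynkin_bracketing _ ha, Int.cast_smul_eq_zsmul]
  rw [← map_dynkin_homog hp]
  refine le_antisymm (Submodule.map_mono (lieComponent_le_homog p)) ?_
  rintro _ ⟨a, ha, rfl⟩
  rw [← Submodule.smul_mem_iff _ (Int.cast_ne_zero.2 hp.ne' : (p 0 : ℚ) ≠ 0), ← h_smul a ha]
  exact ⟨_, ⟨a, ha, rfl⟩, rfl⟩

instance (p : Fin 2 → ℤ) : FiniteDimensional ℚ (homog p) := by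
  refine FiniteDimensional.span_of_finite ℚ (Set.Finite.image _ ?_)
  refine (List.finite_length_eq (Fin 4) (p 0).toNat).subset ?_
  rintro w rfl
  simp

theorem rootMult_add_finrank_relatorComponent {p : Fin 2 → ℤ} (hp : 0 < p 0) :
    rootMult A2hyp p + Module.finrank ℚ (relatorComponent p) =
      Module.finrank ℚ (lieComponent p) := by
  let f := (dynkin ℚ gX).domRestrict (lieComponent p)
  have : FiniteDimensional ℚ (lieComponent p) :=
    Submodule.finiteDimensional_of_le (lieComponent_le_homog p)
  have h_range : f.range = rootSpace A2hyp p := by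
    rw [LinearMap.range_domRestrict, map_dynkin_lieComponent hp]
  have h_ker : f.ker.map (lieComponent p).subtype = relatorComponent p := by
    rw [LinearMap.ker_domRestrict, Submodule.map_comap_subtype, lieComponent_inf_ker hp.ne']
  rw [rootMult, ← h_range, ← h_ker, Submodule.finrank_map_subtype_eq]
  exact f.finrank_range_add_finrank_ker

end Relations

section Coefficients

open FreeAlgebra (ι)

variable {R κ : Type*} [CommRing R]

/-- The coefficient of the word `w` in an element of the free algebra. -/
def coeff (w : List κ) : FreeAlgebra R κ →ₗ[R] R := (wordBasis R κ).coord w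

theorem ext_coeff {a b : FreeAlgebra R κ} (h : ∀ w, coeff w a = coeff w b) : a = b :=
  (wordBasis R κ).ext_elem h

variable [DecidableEq κ]

theorem coeff_word (u w : List κ) : coeff w (word R u) = if w = u then 1 else 0 := by
  rw [coeff, ← wordBasis_apply, Module.Basis.coord_apply, Module.Basis.repr_self,
    Finsupp.single_apply]
  simp only [eq_comm]

theorem coeff_ι_mul (j : κ) (a : FreeAlgebra R κ) (w : List κ) :
    coeff w (ι R j * a) = if w.head? = some j then coeff w.tail a else 0 := by
  induction a using word_induction with
  | word u =>
    rw [← word_cons, coeff_word, coeff_word, ← ite_and]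
    cases w <;> simp
  | add a b ha hb => rw [mul_add, map_add, ha, hb, map_add, ite_add_ite, add_zero]
  | smul c a ha => simp [ha]

theorem coeff_mul_ι (j : κ) (a : FreeAlgebra R κ) (w : List κ) :
    coeff w (a * ι R j) = if w.getLast? = some j then coeff w.dropLast a else 0 := by
  induction a using word_induction with
  | word u =>
    rw [← mul_one (ι R j), ← word_nil, ← word_cons, ← word_append, coeff_word, coeff_word,
      ← ite_and]
    rcases w.eq_nil_or_concat with rfl | ⟨w, i, rfl⟩ <;> simp [and_comm]
  | add a b ha hb => rw [add_mul, map_add, ha, hb, map_add, ite_add_ite, add_zero]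
  | smul c a ha => simp [ha]

theorem coeff_lie_ι (j : κ) (a : FreeAlgebra R κ) (w : List κ) :
    coeff w ⁅ι R j, a⁆ = (if w.head? = some j then coeff w.tail a else 0) -
      if w.getLast? = some j then coeff w.dropLast a else 0 := by
  rw [Ring.lie_def, map_sub, coeff_ι_mul, coeff_mul_ι]

/-- The coefficient of the word `w` in the right-normed bracket of the letters of `u`. -/
def lieCoeff : List κ → List κ → ℤ
  | [], _ => 0
  | [j], w => if w = [j] then 1 else 0
  | _ :: _ :: _, [] => 0
  | j :: k :: u, i :: w => (if i = j then lieCoeff (k :: u) w else 0) -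
      if w.getLastD i = j then lieCoeff (k :: u) (i :: w).dropLast else 0

theorem coeff_rightNormed (u w : List κ) :
    coeff w (rightNormed (ι R) u) = lieCoeff u w := by
  match u, w with
  | [], _ => simp [rightNormed, lieCoeff]
  | [j], w => simpa [rightNormed, lieCoeff] using coeff_word (R := R) [j] w
  | j :: k :: u, [] => simp [rightNormed, lieCoeff, coeff_lie_ι]
  | j :: k :: u, i :: w =>
    rw [rightNormed, coeff_lie_ι, coeff_rightNormed (k :: u), coeff_rightNormed (k :: u)]
    simp [lieCoeff, List.getLast?_cons]

end Coefficients

section Trace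

local notation "T" => FreeAlgebra ℚ (Fin 4)
local notation "θ" => bracketing ℚ (Fin 4)

/-- The words of length `m` whose letters add up to `n`. -/
def words : ℕ → ℕ → List (List (Fin 4))
  | 0, n => if n = 0 then [[]] else []
  | m + 1, n => (List.finRange 4).flatMap fun j : Fin 4 =>
      if j.val ≤ n then (words m (n - j.val)).map (j :: ·) else []

theorem mem_words {m n : ℕ} {w : List (Fin 4)} :
    w ∈ words m n ↔ w.length = m ∧ (w.map Fin.val).sum = n := by
  induction m generalizing n w with
  | zero => unfold words; split_ifs <;> cases w <;> simp [*, eq_comm]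
  | succ m ih =>
    cases w with
    | nil => simp [words]
    | cons j w =>
      have h_cons : j :: w ∈ words (m + 1) n ↔ j.val ≤ n ∧ w ∈ words m (n - j.val) := by
        simp [words]
      rw [h_cons, ih, List.length_cons, List.map_cons, List.sum_cons]
      lia

theorem nodup_words (m n : ℕ) : (words m n).Nodup := by
  induction m generalizing n with
  | zero => unfold words; split_ifs <;> simp
  | succ m ih =>
    refine List.nodup_flatMap.2 ⟨fun j _ => ?_, (List.nodup_finRange 4).imp fun {i j} hij => ?_⟩
    · split_ifs
      · exact (ih _).map fun u w h => (List.cons.inj h).2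
      · exact List.nodup_nil
    · have h_head {k : Fin 4} {w : List (Fin 4)}
          (hw : w ∈ if k.val ≤ n then (words m (n - k.val)).map (k :: ·) else []) :
          w.head? = some k := by
        split_ifs at hw
        · obtain ⟨u, -, rfl⟩ := List.mem_map.1 hw
          rfl
        · exact absurd hw List.not_mem_nil
      exact List.disjoint_left.2 fun w hi hj =>
        hij (Option.some_inj.1 ((h_head hi).symm.trans (h_head hj)))

theorem weight_eq_iff {m n : ℕ} {w : List (Fin 4)} :
    weight w = ![(m : ℤ), (n : ℤ)] ↔ w.length = m ∧ (w.map Fin.val).sum = n := by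
  rw [weight_eq]
  refine ⟨fun h => ⟨?_, ?_⟩, fun ⟨h_length, h_sum⟩ => by rw [h_length, h_sum]⟩
  · exact Nat.cast_injective (congrFun h 0)
  · exact Nat.cast_injective (congrFun h 1)

variable (p : Fin 2 → ℤ)

/-- The words of bidegree `p` as a basis of the homogeneous component. -/
def homogBasis : Module.Basis {w // weight w = p} ℚ (homog p) :=
  (Module.Basis.span ((wordBasis ℚ (Fin 4)).linearIndependent.comp Subtype.val
    (Subtype.val_injective (p := fun w => weight w = p)))).map
    (LinearEquiv.ofEq _ _ (by
      rw [homog, ← funext (wordBasis_apply (R := ℚ)), Set.range_comp, Subtype.range_coe_subtype]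
      rfl))

theorem homogBasis_apply (w : {w // weight w = p}) : (homogBasis p w : T) = word ℚ w := by
  simp [homogBasis, Module.Basis.span_apply]

theorem homogBasis_repr (a : homog p) (w : {w // weight w = p}) :
    (homogBasis p).repr a w = coeff w.val (a : T) := by
  suffices (homogBasis p).coord w = coeff w.val ∘ₗ (homog p).subtype from LinearMap.congr_fun this a
  refine (homogBasis p).ext fun u => ?_
  simp [homogBasis_apply, coeff_word, Finsupp.single_apply, Subtype.ext_iff, eq_comm]

/-- The bracketing operator on the homogeneous component of bidegree `p`. -/
def homogBracketing : Module.End ℚ (homog p) := (θ).restrict fun _ => bracketing_mem_homog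

theorem isProj_lieComponent {p : Fin 2 → ℤ} (hp : p 0 ≠ 0) :
    LinearMap.IsProj ((lieComponent p).submoduleOf (homog p))
      ((p 0 : ℚ)⁻¹ • homogBracketing p) where
  map_mem a := Submodule.smul_mem _ _ ⟨a, a.2, rfl⟩
  map_id a ha := by
    have h_smul : θ (a : T) = p 0 • (a : T) := bracketing_of_mem_lieComponent ha
    ext
    simp [homogBracketing, h_smul, ← Int.cast_smul_eq_zsmul ℚ, hp]

theorem trace_homogBracketing (m n : ℕ) :
    LinearMap.trace ℚ _ (homogBracketing ![m, n]) =
      ((words m n).map fun w => lieCoeff w w).sum := by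
  have h_mem (w : List (Fin 4)) : w ∈ (words m n).toFinset ↔ weight w = ![(m : ℤ), (n : ℤ)] := by
    rw [List.mem_toFinset, mem_words, weight_eq_iff]
  let := Fintype.subtype _ h_mem
  have h_diag (w : {w // weight w = ![(m : ℤ), (n : ℤ)]}) :
      (homogBracketing _).toMatrix (homogBasis _) (homogBasis _) w w =
        (lieCoeff w.val w.val : ℚ) := by
    simp [homogBracketing, LinearMap.toMatrix_apply, homogBasis_repr, homogBasis_apply,
      coeff_rightNormed]
  rw [LinearMap.trace_eq_matrix_trace ℚ (homogBasis _), Matrix.trace]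
  simp only [Matrix.diag_apply, h_diag]
  rw [← Finset.sum_subtype _ h_mem fun w => (lieCoeff w w : ℚ),
    List.sum_toFinset _ (nodup_words m n), Int.cast_list_sum, List.map_map]
  rfl

theorem mul_finrank_lieComponent {m : ℕ} (hm : m ≠ 0) (n : ℕ) :
    (m * Module.finrank ℚ (lieComponent ![m, n]) : ℤ) =
      ((words m n).map fun w => lieCoeff w w).sum := by
  have h_trace := (isProj_lieComponent (p := ![(m : ℤ), (n : ℤ)]) (by simpa)).trace
  rw [(Submodule.submoduleOfEquivOfLe (lieComponent_le_homog _)).finrank_eq, map_smul,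
    trace_homogBracketing, smul_eq_mul, inv_mul_eq_iff_eq_mul₀ (by simpa)] at h_trace
  exact_mod_cast h_trace.symm

end Trace

section RelatorCoefficients

open FreeAlgebra (ι)
open Finset.HasAntidiagonal (antidiagonal mem_antidiagonal)

variable {R : Type*} [CommRing R]

theorem coeff_pad (k : ℕ) (w : List (Fin 4)) :
    coeff w (pad (ι R) k) = if w.map Fin.val = [k] then 1 else 0 := by
  refine pad_cases (P := fun k a => coeff w a = if w.map Fin.val = [k] then 1 else 0) (ι R)
    (fun j => ?_) (fun k hk => ?_) k
  · have h_inj : w.map Fin.val = [j.val] ↔ w = [j] :=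
      Fin.val_injective.list_map.eq_iff (b := [j])
    simpa [h_inj] using coeff_word (R := R) [j] w
  · rw [map_zero, if_neg]
    rintro h
    obtain ⟨j, -, rfl⟩ := List.mem_map.1 (h ▸ List.mem_singleton_self k)
    exact absurd j.isLt (by lia)

theorem coeff_lie_pad (k : ℕ) (a : FreeAlgebra R (Fin 4)) (w : List (Fin 4)) :
    coeff w ⁅pad (ι R) k, a⁆ = (if w.head?.map Fin.val = some k then coeff w.tail a else 0) -
      if w.getLast?.map Fin.val = some k then coeff w.dropLast a else 0 := by
  refine pad_cases (P := fun k x => coeff w ⁅x, a⁆ =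
    (if w.head?.map Fin.val = some k then coeff w.tail a else 0) -
      if w.getLast?.map Fin.val = some k then coeff w.dropLast a else 0) (ι R)
    (fun j => ?_) (fun k hk => ?_) k
  · simp [coeff_lie_ι, Fin.val_inj]
  · have h_lt (o : Option (Fin 4)) : o.map Fin.val ≠ some k := by
      rintro h
      obtain ⟨j, -, rfl⟩ := Option.map_eq_some_iff.1 h
      exact absurd j.isLt (by lia)
    simp only [zero_lie, map_zero, if_neg (h_lt _), sub_zero]

theorem coeff_lieConv_pad {v : ℕ → FreeAlgebra R (Fin 4)} {g : List (Fin 4) → R}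
    (hv : ∀ k w, coeff w (v k) = if (w.map Fin.val).sum = k then g w else 0)
    (k : ℕ) (w : List (Fin 4)) :
    coeff w (lieConv (pad (ι R)) v k) =
      if (w.map Fin.val).sum = k then g w.tail - g w.dropLast else 0 := by
  have h_sum (i : ℕ) (u : List (Fin 4)) : (∑ p ∈ antidiagonal k,
      if i = p.1 then coeff u (v p.2) else 0) = if i + (u.map Fin.val).sum = k then g u else 0 := by
    simp only [← mem_antidiagonal (a := (i, (u.map Fin.val).sum)),
      ← Finset.sum_ite_eq (antidiagonal k) _ fun _ => g u]
    refine Finset.sum_congr rfl fun p _ => ?_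
    simp only [hv, ← ite_and, Prod.ext_iff]
  rw [lieConv, map_sum]
  simp only [coeff_lie_pad, Finset.sum_sub_distrib]
  rcases eq_or_ne w [] with rfl | hw
  · simp
  · have h_head : (w.head hw).val + (w.tail.map Fin.val).sum = (w.map Fin.val).sum := by
      rw [← List.sum_cons, ← List.map_cons, List.cons_head_tail]
    have h_last : (w.getLast hw).val + (w.dropLast.map Fin.val).sum = (w.map Fin.val).sum := by
      conv_rhs => rw [← List.dropLast_append_getLast hw, List.map_append, List.sum_append, add_comm]
      simp
    simp only [List.head?_eq_some_head hw, List.getLast?_eq_some_getLast hw, Option.map_some,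
      Option.some_inj, h_sum, h_head, h_last]
    split_ifs <;> simp

theorem lieConv_succ {L : Type*} [LieRing L] (u : ℕ → L) {v : ℕ → L} (hv : v 0 = 0) (k : ℕ) :
    lieConv u v (k + 1) = lieConv u (fun k => v (k + 1)) k := by
  simp [lieConv, Finset.Nat.sum_antidiagonal_succ', hv]

theorem lieConv_zero_of_eq_zero {L : Type*} [LieRing L] (u : ℕ → L) {v : ℕ → L} (hv : v 0 = 0) :
    lieConv u v 0 = 0 := by
  simp [lieConv, hv]

theorem relator_eq {L : Type*} [LieRing L] [LieAlgebra R L] (x : Fin 4 → L) (k : ℕ) :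
    relator x k =
      lieConv (pad x) (lieConv (pad x) (lieConv (pad x) fun k => k • pad x k)) (k + 1) := by
  have h_zero := zero_smul ℕ (pad x 0)
  rw [lieConv_succ _ (lieConv_zero_of_eq_zero _ (lieConv_zero_of_eq_zero _ h_zero)),
    funext (lieConv_succ (pad x) (lieConv_zero_of_eq_zero _ h_zero)),
    funext (lieConv_succ (pad x) h_zero), relator]

/-- The third difference of the letters of a word of length four, which is its coefficient in the
relator of the same weight. -/
def relatorCoeff : List (Fin 4) → ℤ
  | [p, q, r, s] => s.val - 3 * r.val + 3 * q.val - p.val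
  | _ => 0

theorem coeff_relator (w : List (Fin 4)) (k : ℕ) : coeff w (relator (ι R) k) =
    if (w.map Fin.val).sum = k + 1 then (relatorCoeff w : R) else 0 := by
  let g : List (Fin 4) → R := fun
    | [j] => j.val
    | _ => 0
  have h_pad (k : ℕ) (w : List (Fin 4)) : coeff w (k • pad (ι R) k) =
      if (w.map Fin.val).sum = k then g w else 0 := by
    rw [map_nsmul, coeff_pad]
    rcases w with _ | ⟨i, _ | ⟨j, w⟩⟩
    · simp [g]
    · simp only [List.map_cons, List.map_nil, List.cons.injEq, and_true, List.sum_cons,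
        List.sum_nil, add_zero, g]
      split_ifs with hk <;> simp [hk]
    · simp [g]
  rw [relator_eq (R := R), coeff_lieConv_pad (coeff_lieConv_pad (coeff_lieConv_pad h_pad))]
  congr 1
  rcases w with _ | ⟨p, _ | ⟨q, _ | ⟨r, _ | ⟨s, _ | ⟨t, w⟩⟩⟩⟩⟩
  · simp [g, relatorCoeff]
  · simp [g, relatorCoeff]
  · simp [g, relatorCoeff]
  · simp [g, relatorCoeff]
  · simp only [g, relatorCoeff, List.tail_cons, List.dropLast_cons_cons, List.dropLast_singleton]
    push_cast
    ring
  · simp [g, relatorCoeff]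

end RelatorCoefficients

theorem linearIndepOn_of_forall_dvd {α M : Type*} [AddCommGroup M] [IsAddTorsionFree M]
    {f : α → M} {s : Set α} {p : ℤ} (hp : Prime p) (h : ∀ c ∈ Finsupp.supported ℤ ℤ s,
      Finsupp.linearCombination ℤ f c = 0 → ∀ a, p ∣ c a) :
    LinearIndepOn ℤ f s := by
  have h_pow (k : ℕ) : ∀ c ∈ Finsupp.supported ℤ ℤ s, Finsupp.linearCombination ℤ f c = 0 →
      ∀ a, p ^ k ∣ c a := by
    induction k with
    | zero => simp
    | succ k ih =>
      intro c hc h_rel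
      have h_dvd := h c hc h_rel
      let d : α →₀ ℤ := c.mapRange (· / p) (Int.zero_ediv p)
      have h_smul : p • d = c := by
        ext a
        exact Int.mul_ediv_cancel' (h_dvd a)
      have hd : d ∈ Finsupp.supported ℤ ℤ s := fun a ha => hc (Finsupp.support_mapRange ha)
      rw [← h_smul, map_smul, smul_eq_zero_iff_right hp.ne_zero] at h_rel
      intro a
      rw [← h_smul, pow_succ', Finsupp.smul_apply, smul_eq_mul]
      exact mul_dvd_mul_left p (ih d hd h_rel a)
  refine linearIndepOn_iff.2 fun c hc h_rel => Finsupp.ext fun a => ?_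
  by_contra h_ne
  obtain ⟨k, hk⟩ := FiniteMultiplicity.of_not_isUnit hp.not_isUnit h_ne
  exact hk (h_pow _ c hc h_rel a)

section Elimination

variable {α : Type*} [DecidableEq α]

/-- The linear equation `∑ t.2 * c t.1 = 0` over the terms `t` of `E`, read modulo `p`, determines
`c a` once the unknowns outside `S` are known to vanish. -/
abbrev Isolates (p : ℤ) (S : List α) (a : α) (E : List (α × ℤ)) : Prop :=
  (∀ t ∈ E, p ∣ t.2 ∨ t.1 = a ∨ t.1 ∉ S) ∧ ¬ p ∣ (E.map fun t => if t.1 = a then t.2 else 0).sum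

/-- The unknowns of `S` that no equation of the system `eqs` isolates modulo `p`. -/
def unresolved (p : ℤ) (eqs : α → List (List (α × ℤ))) (S : List α) : List α :=
  S.filter fun a => ¬ ∃ E ∈ eqs a, Isolates p S a E

theorem Isolates.dvd {p : ℤ} (hp : Prime p) {S : List α} {a : α} {E : List (α × ℤ)}
    (hE : Isolates p S a E) {c : α → ℤ} (hc : ∀ b ∉ S, p ∣ c b)
    (h : (E.map fun t => c t.1 * t.2).sum = 0) : p ∣ c a := by
  have h_sub : p ∣ (E.map fun t => c t.1 * t.2 - c a * if t.1 = a then t.2 else 0).sum := by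
    refine List.dvd_sum fun x hx => ?_
    obtain ⟨t, ht, rfl⟩ := List.mem_map.1 hx
    split_ifs with hta
    · simp [hta]
    · rw [mul_zero, sub_zero]
      obtain h_dvd | h_eq | h_notMem := hE.1 t ht
      · exact h_dvd.mul_left _
      · exact absurd h_eq hta
      · exact (hc _ h_notMem).mul_right _
  have h_sum : (E.map fun t => c t.1 * t.2).sum =
      (E.map fun t => c t.1 * t.2 - c a * if t.1 = a then t.2 else 0).sum +
        c a * (E.map fun t => if t.1 = a then t.2 else 0).sum := by
    rw [← List.sum_map_mul_left, ← List.sum_map_add]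
    simp
  rw [h, eq_comm, add_eq_zero_iff_neg_eq] at h_sum
  exact (hp.dvd_or_dvd (h_sum ▸ h_sub.neg_right)).resolve_right hE.2

theorem dvd_of_notMem_iterate_unresolved {p : ℤ} (hp : Prime p) {eqs : α → List (List (α × ℤ))}
    {S : List α} {c : α → ℤ} (hc : ∀ a ∉ S, p ∣ c a)
    (h : ∀ a ∈ S, ∀ E ∈ eqs a, (E.map fun t => c t.1 * t.2).sum = 0) (k : ℕ) :
    ∀ a ∉ (unresolved p eqs)^[k] S, p ∣ c a := by
  induction k generalizing S with
  | zero => exact hc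
  | succ _ ih =>
    refine ih (fun a ha => ?_) fun a ha => h a (List.mem_of_mem_filter ha)
    by_cases haS : a ∈ S
    · obtain ⟨E, hE, h_isolates⟩ : ∃ E ∈ eqs a, Isolates p S a E := by
        by_contra h_none
        exact ha (List.mem_filter.2 ⟨haS, decide_eq_true h_none⟩)
      exact h_isolates.dvd hp hc (h a haS E hE)
    · exact hc a haS

theorem sum_mul_sum_ite (c : α →₀ ℤ) (E : List (α × ℤ)) :
    (c.sum fun a x => x * (E.map fun t => if t.1 = a then t.2 else 0).sum) =
      (E.map fun t => c t.1 * t.2).sum := by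
  induction E with
  | nil => simp
  | cons t E ih =>
    simp only [List.map_cons, List.sum_cons, mul_add, Finsupp.sum_add, ih]
    simp +contextual [Finsupp.sum_ite_eq]

end Elimination

section RelatorRows

open FreeAlgebra (ι)

/-- A list of terms such that for every word `u` of length `m` the coefficient of `w` in `ad u a` is
the sum of `t.2` over the terms `t` with `t.1 = u`, where `g v` is the coefficient of `v` in `a`. In
a word of `ad u a` each letter of `u` stands at one of the ends of what remains. -/
def adTerms {κ : Type*} (g : List κ → ℤ) : ℕ → List κ → List (List κ × ℤ)
  | 0, w => [([], g w)]
  | _ + 1, [] => []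
  | m + 1, i :: w => (adTerms g m w).map (fun t => (i :: t.1, t.2)) ++
      (adTerms g m (i :: w).dropLast).map fun t => (w.getLastD i :: t.1, -t.2)

theorem coeff_adAction_word {R κ : Type*} [CommRing R] [DecidableEq κ] {a : FreeAlgebra R κ}
    {g : List κ → ℤ} (u w : List κ) (h : ∀ v, (u ++ v).Perm w → coeff v a = (g v : R)) :
    coeff w (adAction R (ι R) (word R u) a) =
      ((adTerms g u.length w).map fun t => if t.1 = u then t.2 else 0).sum := by
  induction u generalizing w with
  | nil => simpa [adTerms] using h w (.refl w)
  | cons j u ih =>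
    rw [word_cons, map_mul, Module.End.mul_apply, adAction_ι, coeff_lie_ι]
    cases w with
    | nil => simp [adTerms]
    | cons i w =>
      have h_last : (w.getLastD i :: (i :: w).dropLast).Perm (i :: w) := by
        refine (List.perm_append_singleton _ _).symm.trans (.of_eq ?_)
        exact List.dropLast_append_getLast? _ (by simp [List.getLast?_cons])
      have h_end (j' : κ) (w' : List κ) (hw' : (j' :: w').Perm (i :: w)) :
          (if j' = j then coeff w' (adAction R (ι R) (word R u) a) else 0) = (((adTerms g
            u.length w').map fun t => if j' :: t.1 = j :: u then t.2 else 0).sum : ℤ) := by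
        split_ifs with hj
        · subst hj
          simpa using ih w' fun v hv => h v ((hv.cons _).trans hw')
        · simp [hj]
      simp only [List.head?_cons, List.getLast?_cons, Option.some_inj, List.tail_cons,
        ← List.getLastD_eq_getLast?, h_end _ _ (.refl _), h_end _ _ h_last]
      simp [adTerms, Function.comp_def, sub_eq_add_neg, List.sum_neg, neg_ite]

end RelatorRows

section Independence

open FreeAlgebra (ι)

theorem relator_eq_zero {k : ℕ} (hk : 11 ≤ k) : relator (ι ℚ) k = 0 := by
  refine ext_coeff fun w => ?_
  rw [coeff_relator, map_zero, ite_eq_right_iff]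
  intro h
  match w with
  | [p, q, r, s] =>
    simp only [List.map_cons, List.map_nil, List.sum_cons, List.sum_nil] at h
    obtain ⟨hp, hq, hr, hs⟩ : p = 3 ∧ q = 3 ∧ r = 3 ∧ s = 3 := by lia
    norm_num [relatorCoeff, hp, hq, hr, hs]
  | [] | [_] | [_, _] | [_, _, _] | _ :: _ :: _ :: _ :: _ :: _ => simp [relatorCoeff]

/-- The element `ad u ρ` of bidegree `(u.length + 4, n)`, where `ρ` is a relator. -/
def adRelator (n : ℕ) (u : List (Fin 4)) : FreeAlgebra ℚ (Fin 4) :=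
  adAction ℚ (ι ℚ) (word ℚ u) (relator (ι ℚ) (n - (u.map Fin.val).sum - 1))

/-- The words `u` of length `m` for which `adRelator n u` involves a nonzero relator. -/
def adRelatorWords (m n : ℕ) : List (List (Fin 4)) :=
  ((List.range n).filter fun s => n ≤ s + 11).flatMap (words m)

theorem mem_adRelatorWords {m n : ℕ} {u : List (Fin 4)} : u ∈ adRelatorWords m n ↔
    u.length = m ∧ (u.map Fin.val).sum < n ∧ n ≤ (u.map Fin.val).sum + 11 := by
  simp only [adRelatorWords, List.mem_flatMap, List.mem_filter, List.mem_range, decide_eq_true_eq,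
    mem_words]
  exact ⟨fun ⟨_, h, h_length, h_sum⟩ => ⟨h_length, h_sum ▸ h⟩,
    fun ⟨h_length, h⟩ => ⟨_, h, h_length, rfl⟩⟩

theorem nodup_adRelatorWords (m n : ℕ) : (adRelatorWords m n).Nodup := by
  refine List.nodup_flatMap.2 ⟨fun s _ => nodup_words m s, ?_⟩
  refine (List.nodup_range.filter _).imp fun {s t} hst => List.disjoint_left.2 fun u hs ht => ?_
  exact hst ((mem_words.1 hs).2.symm.trans (mem_words.1 ht).2)

theorem relatorComponent_eq_span (m n : ℕ) :
    relatorComponent ![((m + 4 : ℕ) : ℤ), n] =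
      Submodule.span ℚ (adRelator n '' {u | u ∈ adRelatorWords m n}) := by
  have h_bidegree (u : List (Fin 4)) (k : ℕ) :
      weight u + ![4, (k : ℤ) + 1] = ![((m + 4 : ℕ) : ℤ), n] ↔
        u.length = m ∧ (u.map Fin.val).sum + k + 1 = n := by
    simp only [weight_eq, funext_iff, Fin.forall_fin_two, Pi.add_apply, Matrix.cons_val_zero,
      Matrix.cons_val_one]
    lia
  refine le_antisymm (Submodule.span_le.2 ?_) (Submodule.span_le.2 ?_)
  · rintro _ ⟨u, k, h, rfl⟩
    obtain ⟨h_length, h_sum⟩ := (h_bidegree u k).1 h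
    obtain hk | hk := lt_or_ge k 11
    · refine Submodule.subset_span ⟨u, mem_adRelatorWords.2 ⟨h_length, by lia, by lia⟩, ?_⟩
      rw [adRelator, ← h_sum, add_assoc, Nat.add_sub_cancel_left, Nat.add_sub_cancel]
    · simp [relator_eq_zero hk]
  · rintro _ ⟨u, hu, rfl⟩
    obtain ⟨h_length, h_lt, -⟩ := mem_adRelatorWords.1 hu
    exact Submodule.subset_span ⟨u, _, (h_bidegree u _).2 ⟨h_length, by lia⟩, rfl⟩

theorem coeff_adRelator {n : ℕ} {u w : List (Fin 4)} (hu : (u.map Fin.val).sum < n)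
    (hw : (w.map Fin.val).sum = n) : coeff w (adRelator n u) =
      ((adTerms relatorCoeff u.length w).map fun t => if t.1 = u then t.2 else 0).sum := by
  refine coeff_adAction_word u w fun v hv => ?_
  have h_sum : (u.map Fin.val).sum + (v.map Fin.val).sum = n := by
    rw [← hw, ← (hv.map Fin.val).sum_eq, List.map_append, List.sum_append]
  rw [coeff_relator, if_pos (by lia)]

theorem sum_adTerms_eq_zero {m n : ℕ} {c : List (Fin 4) →₀ ℤ}
    (hc : c ∈ Finsupp.supported ℤ ℤ {u | u ∈ adRelatorWords m n})
    (h : Finsupp.linearCombination ℤ (adRelator n) c = 0) {w : List (Fin 4)}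
    (hw : (w.map Fin.val).sum = n) :
    ((adTerms relatorCoeff m w).map fun t => c t.1 * t.2).sum = 0 := by
  have h_coeff := congrArg (coeff w) h
  rw [Finsupp.linearCombination_apply, Finsupp.sum, map_sum, map_zero] at h_coeff
  rw [← sum_mul_sum_ite, Finsupp.sum, ← Int.cast_inj (α := ℚ), Int.cast_sum, Int.cast_zero,
    ← h_coeff]
  refine Finset.sum_congr rfl fun u hu => ?_
  obtain ⟨h_length, h_lt, -⟩ := mem_adRelatorWords.1 (hc hu)
  rw [map_zsmul, coeff_adRelator h_lt hw, h_length, zsmul_eq_mul, Int.cast_mul]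

/-- The coefficients of the words `u ++ v`, as equations for the relations among the elements
`adRelator n u'`. -/
def adRelatorEqs (m n : ℕ) (u : List (Fin 4)) : List (List (List (Fin 4) × ℤ)) :=
  (words 4 (n - (u.map Fin.val).sum)).map fun v => adTerms relatorCoeff m (u ++ v)

theorem linearIndepOn_adRelator {m n : ℕ} {p : ℤ} (hp : Prime p) {k : ℕ}
    (h : (unresolved p (adRelatorEqs m n))^[k] (adRelatorWords m n) = []) :
    LinearIndepOn ℚ (adRelator n) {u | u ∈ adRelatorWords m n} := by
  refine (LinearIndependent.iff_fractionRing ℤ ℚ).1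
    (linearIndepOn_of_forall_dvd hp fun c hc h_rel a => ?_)
  refine dvd_of_notMem_iterate_unresolved hp (fun b hb => ?_) (fun u hu E hE => ?_) k a
    (h ▸ List.not_mem_nil)
  · rw [Finsupp.notMem_support_iff.1 fun hb' => hb (hc hb')]
    exact dvd_zero p
  · obtain ⟨v, hv, rfl⟩ := List.mem_map.1 hE
    refine sum_adTerms_eq_zero hc h_rel ?_
    rw [List.map_append, List.sum_append, (mem_words.1 hv).2]
    exact Nat.add_sub_cancel' (mem_adRelatorWords.1 hu).2.1.le

theorem finrank_relatorComponent {m n : ℕ}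
    (h : LinearIndepOn ℚ (adRelator n) {u | u ∈ adRelatorWords m n}) :
    Module.finrank ℚ (relatorComponent ![((m + 4 : ℕ) : ℤ), n]) = (adRelatorWords m n).length := by
  have h_mem (u : List (Fin 4)) : u ∈ (adRelatorWords m n).toFinset ↔
      u ∈ {u | u ∈ adRelatorWords m n} := List.mem_toFinset
  let := Fintype.subtype _ h_mem
  rw [relatorComponent_eq_span, Set.image_eq_range, finrank_span_eq_card h,
    Fintype.card_of_subtype _ h_mem, List.toFinset_card_of_nodup (nodup_adRelatorWords m n)]

theorem rootMult_eq_of_sum_lieCoeff_eq {m n : ℕ} {p : ℤ} (hp : Prime p) {k μ : ℕ}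
    (h_indep : (unresolved p (adRelatorEqs m n))^[k] (adRelatorWords m n) = [])
    (h_trace : ((words (m + 4) n).map fun w => lieCoeff w w).sum =
      (m + 4) * (μ + (adRelatorWords m n).length)) :
    rootMult A2hyp ![m + 4, n] = μ := by
  have h_lie := mul_finrank_lieComponent (m := m + 4) (by lia) n
  rw [← rootMult_add_finrank_relatorComponent (Nat.cast_pos.2 (Nat.succ_pos (m + 3))),
    finrank_relatorComponent (linearIndepOn_adRelator hp h_indep), h_trace] at h_lie
  have h_cancel : rootMult A2hyp ![((m + 4 : ℕ) : ℤ), n] + (adRelatorWords m n).length =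
      μ + (adRelatorWords m n).length := by
    refine Nat.eq_of_mul_eq_mul_left (Nat.succ_pos (m + 3)) ?_
    exact_mod_cast h_lie
  exact_mod_cast Nat.add_right_cancel h_cancel

/-- The pairs `(n, μ)` where `μ` is the multiplicity of `(7, n)` in `g(A2hyp)`, for
`3 ≤ n ≤ 12`. -/
def rowSeven : List (ℕ × ℕ) :=
  [(3, 2), (4, 9), (5, 27), (6, 60), (7, 107), (8, 162), (9, 211), (10, 240), (11, 240), (12, 211)]

set_option maxHeartbeats 1000000 in
-- The kernel carries out the eliminations, with up to 64 unknowns each.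
theorem iterate_unresolved_eq_nil_of_mem_rowSeven : ∀ p ∈ rowSeven,
    (unresolved 3 (adRelatorEqs 3 p.1))^[4] (adRelatorWords 3 p.1) = [] := by
  decide +kernel

set_option maxHeartbeats 1000000 in
-- The kernel computes the bracketings of more than ten thousand words of length seven.
theorem sum_lieCoeff_of_mem_rowSeven : ∀ p ∈ rowSeven,
    ((words 7 p.1).map fun w => lieCoeff w w).sum = 7 * (p.2 + (adRelatorWords 3 p.1).length) := by
  decide +kernel

theorem rootMult_of_mem_rowSeven {n μ : ℕ} (h : (n, μ) ∈ rowSeven) :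
    rootMult A2hyp ![7, n] = μ := by
  have h_indep := iterate_unresolved_eq_nil_of_mem_rowSeven _ h
  have h_trace := sum_lieCoeff_of_mem_rowSeven _ h
  exact rootMult_eq_of_sum_lieCoeff_eq (m := 3) Int.prime_three h_indep h_trace

end Independence

end RankTwo

/-- **Root multiplicities in the `m = 7` row of the simplest rank-2 hyperbolic Kac–Moody
algebra.** -/
theorem rank2_row7_mults :
    rootMult A2hyp ![7, 3] = 2 ∧
    rootMult A2hyp ![7, 4] = 9 ∧
    rootMult A2hyp ![7, 5] = 27 ∧
    rootMult A2hyp ![7, 6] = 60 ∧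
    rootMult A2hyp ![7, 7] = 107 ∧
    rootMult A2hyp ![7, 8] = 162 ∧
    rootMult A2hyp ![7, 9] = 211 ∧
    rootMult A2hyp ![7, 10] = 240 ∧
    rootMult A2hyp ![7, 11] = 240 ∧
    rootMult A2hyp ![7, 12] = 211 := by
  have h (n μ : ℕ) (h_mem : (n, μ) ∈ RankTwo.rowSeven) : rootMult A2hyp ![7, n] = μ :=
    RankTwo.rootMult_of_mem_rowSeven h_mem
  exact ⟨h 3 2 (by decide), h 4 9 (by decide), h 5 27 (by decide),
    h 6 60 (by decide), h 7 107 (by decide), h 8 162 (by decide),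
    h 9 211 (by decide), h 10 240 (by decide), h 11 240 (by decide),
    h 12 211 (by decide)⟩
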